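/- As x → ∞, the sum of the primes below x satisfies Σ_{p prime, p < x} p = x²/(2 log x) + x²/(4 (log x)²) + O( x²/(log x)³ ). -/

import Mathlib

open Filter

/-- The sum of the primes strictly below the real number `x`. -/
noncomputable def primeSumBelow (x : ℝ) : ℝ :=
  ∑ p ∈ (Finset.range ⌈x⌉₊).filter Nat.Prime, (p : ℝ)

section PieceA
open Complex Set MeasureTheory intervalIntegral

/-- boundary integral over a rectangle `[a,b] × [-R,R]` -/
noncomputable def rectInt (f : ℂ → ℂ) (a b R : ℝ) : ℂ :=
  (∫ x : ℝ in a..b, f (x + (-R : ℝ) * I)) - (∫ x : ℝ in a..b, f (x + (R : ℝ) * I)) +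
      I * (∫ y : ℝ in (-R)..R, f (b + y * I)) - I * (∫ y : ℝ in (-R)..R, f (a + y * I))

lemma rectInt_zero_of_diff {f : ℂ → ℂ} {a b R : ℝ} (hab : a ≤ b) (hR : 0 ≤ R)
    (H : DifferentiableOn ℂ f (Icc a b ×ℂ Icc (-R) R)) : rectInt f a b R = 0 := by
  have := integral_boundary_rect_eq_zero_of_differentiableOn f (⟨a, -R⟩ : ℂ) (⟨b, R⟩ : ℂ)
    (by simpa [uIcc_of_le hab, uIcc_of_le (show -R ≤ R by linarith)] using H)
  simpa [rectInt] using this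

lemma pt_ne_zero_of_im {x y : ℝ} (h : y ≠ 0) : (x : ℂ) + y * I ≠ 0 := by
  intro h0; apply h; simpa using congrArg Complex.im h0

lemma pt_ne_zero_of_re {x y : ℝ} (h : x ≠ 0) : (x : ℂ) + y * I ≠ 0 := by
  intro h0; apply h; simpa using congrArg Complex.re h0

lemma rectInt_inv {a b R : ℝ} (ha : a < 0) (hb : 0 < b) (hR : 0 < R) :
    rectInt (fun z => z⁻¹) a b R = 2 * Real.pi * I := by
  -- use log primitives
  have hor : ∀ c : ℝ, c ≠ 0 → ∫ x : ℝ in a..b, ((x : ℂ) + (c : ℝ) * I)⁻¹ =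
      Complex.log (b + c * I) - Complex.log (a + c * I) := by
    intro c hc
    refine integral_eq_sub_of_hasDerivAt (f := fun x : ℝ => Complex.log (x + c * I)) ?_ ?_
    · intro x _
      have h1 : HasDerivAt (fun x : ℝ => (x : ℂ) + c * I) 1 x :=
        (ofRealCLM.hasDerivAt (x := x)).add_const _
      have h2 := h1.clog_real (by right; simpa using hc)
      simpa [one_div] using h2
    · apply Continuous.intervalIntegrable
      exact Continuous.inv₀ (by fun_prop) (fun x => pt_ne_zero_of_im hc)
  have ver : ∀ c : ℝ, 0 < c → I * ∫ y : ℝ in (-R)..R, ((c : ℂ) + y * I)⁻¹ =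
      Complex.log (c + R * I) - Complex.log (c + (-R : ℝ) * I) := by
    intro c hc
    rw [← intervalIntegral.integral_const_mul]
    refine integral_eq_sub_of_hasDerivAt (f := fun y : ℝ => Complex.log (c + y * I)) ?_ ?_
    · intro y _
      have h1 : HasDerivAt (fun y : ℝ => (c : ℂ) + y * I) I y := by
        simpa using ((ofRealCLM.hasDerivAt (x := y)).mul_const I).const_add (c : ℂ)
      have h2 := h1.clog_real (by left; simpa using hc)
      simpa [div_eq_mul_inv] using h2
    · apply Continuous.intervalIntegrable
      exact continuous_const.mul
        (Continuous.inv₀ (by fun_prop) (fun x => pt_ne_zero_of_re hc.ne'))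
  have ver2 : I * ∫ y : ℝ in (-R)..R, ((a : ℂ) + y * I)⁻¹ =
      Complex.log (-a + (-R : ℝ) * I) - Complex.log (-a + (R : ℝ) * I) := by
    have := ver (-a) (by linarith)
    have h2 : ∫ y : ℝ in (-R)..R, ((a : ℂ) + y * I)⁻¹ =
        - ∫ y : ℝ in (-R)..R, (((-a : ℝ) : ℂ) + y * I)⁻¹ := by
      rw [← intervalIntegral.integral_neg]
      have := intervalIntegral.integral_comp_neg (a := -R) (b := R)
        (fun y : ℝ => ((a : ℂ) + y * I)⁻¹)
      rw [neg_neg] at this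
      rw [← this]
      congr 1; ext y
      rw [← inv_neg]; congr 1; push_cast; ring
    rw [h2, mul_neg, this]; push_cast; ring
  unfold rectInt
  rw [hor R hR.ne', hor (-R) (by linarith), ver b hb, ver2]
  have e1 : Complex.log (-a + (-R : ℝ) * I) = Complex.log (a + (R:ℝ) * I) - Real.pi * I := by
    have : (-a + (-R : ℝ) * I : ℂ) = -(a + (R:ℝ) * I) := by push_cast; ring
    rw [this, Complex.log, Complex.log, arg_neg_eq_arg_sub_pi_of_im_pos (by simpa using hR)]
    simp only [norm_neg]; push_cast; ring
  have e2 : Complex.log (-a + (R : ℝ) * I) = Complex.log (a + (-R:ℝ) * I) + Real.pi * I := by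
    have : (-a + (R : ℝ) * I : ℂ) = -(a + (-R:ℝ) * I) := by push_cast; ring
    rw [this, Complex.log, Complex.log, arg_neg_eq_arg_add_pi_of_im_neg (by simpa using hR)]
    simp only [norm_neg]; push_cast; ring
  rw [e1, e2]; ring

lemma rectInt_pole {H : ℂ → ℂ} {U : Set ℂ} (hU : IsOpen U) {a b R : ℝ} (ha : a < 0) (hb : 0 < b)
    (hR : 0 < R) (hsub : Icc a b ×ℂ Icc (-R) R ⊆ U) (hH : DifferentiableOn ℂ H U) :
    rectInt (fun z => H z * z⁻¹) a b R = 2 * Real.pi * I * H 0 := by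
  have h0 : (0 : ℂ) ∈ U := hsub (by simp [mem_reProdIm]; exact ⟨⟨ha.le, hb.le⟩, hR.le⟩)
  have hd : DifferentiableOn ℂ (dslope H 0) U :=
    (Complex.differentiableOn_dslope (hU.mem_nhds h0)).2 hH
  have hz := rectInt_zero_of_diff (a := a) (b := b) (by linarith) hR.le (hd.mono hsub)
  have hi := rectInt_inv ha hb hR
  have key : ∀ z : ℂ, z ≠ 0 → H z * z⁻¹ = dslope H 0 z + H 0 * z⁻¹ := by
    intro z hz
    rw [dslope_of_ne _ hz, slope_def_field]; field_simp; ring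
  have hc := (hd.mono hsub).continuousOn
  have memh : ∀ x ∈ uIcc a b, ∀ c ∈ Icc (-R) R, ((x:ℂ) + (c:ℝ) * I) ∈ Icc a b ×ℂ Icc (-R) R := by
    intro x hx c hc
    rw [uIcc_of_le (by linarith)] at hx
    simpa [mem_reProdIm] using ⟨hx, hc⟩
  have memv : ∀ y ∈ uIcc (-R) R, ∀ c ∈ Icc a b, ((c:ℂ) + (y:ℝ) * I) ∈ Icc a b ×ℂ Icc (-R) R := by
    intro x hx c hc
    rw [uIcc_of_le (by linarith)] at hx
    simpa [mem_reProdIm] using ⟨hc, hx⟩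
  have hor : ∀ c ∈ Icc (-R) R, c ≠ 0 → ∫ x : ℝ in a..b, H (x + (c:ℝ) * I) * (x + (c:ℝ) * I : ℂ)⁻¹ =
      (∫ x : ℝ in a..b, dslope H 0 (x + (c:ℝ) * I)) +
        H 0 * ∫ x : ℝ in a..b, ((x : ℂ) + (c:ℝ) * I)⁻¹ := by
    intro c hcR hc0
    rw [← intervalIntegral.integral_const_mul, ← intervalIntegral.integral_add]
    · congr 1; ext x; exact key _ (pt_ne_zero_of_im hc0)
    · apply ContinuousOn.intervalIntegrable
      exact hc.comp (by fun_prop) (fun x hx => memh x hx c hcR)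
    · apply Continuous.intervalIntegrable
      exact continuous_const.mul (Continuous.inv₀ (by fun_prop) (fun x => pt_ne_zero_of_im hc0))
  have ver : ∀ c ∈ Icc a b, c ≠ 0 → ∫ y : ℝ in (-R)..R, H (c + (y:ℝ) * I) * (c + (y:ℝ) * I : ℂ)⁻¹ =
      (∫ y : ℝ in (-R)..R, dslope H 0 (c + (y:ℝ) * I)) +
        H 0 * ∫ y : ℝ in (-R)..R, ((c : ℂ) + (y:ℝ) * I)⁻¹ := by
    intro c hcR hc0
    rw [← intervalIntegral.integral_const_mul, ← intervalIntegral.integral_add]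
    · congr 1; ext x; exact key _ (pt_ne_zero_of_re hc0)
    · apply ContinuousOn.intervalIntegrable
      exact hc.comp (by fun_prop) (fun x hx => memv x hx c hcR)
    · apply Continuous.intervalIntegrable
      exact continuous_const.mul (Continuous.inv₀ (by fun_prop) (fun x => pt_ne_zero_of_re hc0))
  unfold rectInt at hz hi ⊢
  rw [hor R ⟨by linarith, le_rfl⟩ hR.ne', hor (-R) ⟨le_rfl, by linarith⟩ (by linarith),
    ver a ⟨le_rfl, by linarith⟩ ha.ne, ver b ⟨by linarith, le_rfl⟩ hb.ne']
  linear_combination hz + H 0 * hi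
end PieceA

section PieceB
open Complex Set MeasureTheory intervalIntegral Filter Topology Asymptotics

lemma norm_cpow_aux {u : ℝ} (hu : 0 < u) (z : ℂ) : ‖(u : ℂ) ^ (-(z + 1))‖ = u ^ (-z.re - 1) := by
  rw [norm_cpow_eq_rpow_re_of_pos hu]; congr 1; simp; ring

lemma norm_term_le {g : ℝ → ℂ} {B : ℝ} (hB : ∀ u, 1 ≤ u → ‖g u‖ ≤ B) {u : ℝ} (hu : 1 ≤ u) (z : ℂ) :
    ‖g u * (u : ℂ) ^ (-(z + 1))‖ ≤ B * u ^ (-z.re - 1) := by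
  have : 0 < u := by linarith
  rw [norm_mul, norm_cpow_aux this]
  exact mul_le_mul_of_nonneg_right (hB u hu) (by positivity)

lemma term_meas {g : ℝ → ℂ} (hg : Measurable g) (z : ℂ) :
    Measurable (fun u : ℝ => g u * (u : ℂ) ^ (-(z + 1))) := by
  fun_prop

lemma term_integrable {g : ℝ → ℂ} (hg : Measurable g) {B : ℝ} (hB : ∀ u, 1 ≤ u → ‖g u‖ ≤ B)
    {z : ℂ} (hz : 0 < z.re) {X : ℝ} (hX : 1 ≤ X) :
    IntegrableOn (fun u : ℝ => g u * (u : ℂ) ^ (-(z + 1))) (Ioi X) := by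
  have h1 : IntegrableOn (fun u : ℝ => B * u ^ (-z.re - 1)) (Ioi X) :=
    (integrableOn_Ioi_rpow_of_lt (by linarith) (by linarith)).const_mul B
  refine Integrable.mono' h1 (term_meas hg z).aestronglyMeasurable ?_
  filter_upwards [ae_restrict_mem measurableSet_Ioi] with u hu
  exact norm_term_le hB (hX.trans (le_of_lt hu)) z

lemma tail_bound {g : ℝ → ℂ} {B : ℝ} (hB : ∀ u, 1 ≤ u → ‖g u‖ ≤ B)
    {z : ℂ} (hz : 0 < z.re) {X : ℝ} (hX : 1 ≤ X) :
    ‖∫ u in Ioi X, g u * (u : ℂ) ^ (-(z + 1))‖ ≤ B * (X ^ (-z.re) / z.re) := by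
  have h1 : IntegrableOn (fun u : ℝ => B * u ^ (-z.re - 1)) (Ioi X) :=
    (integrableOn_Ioi_rpow_of_lt (by linarith) (by linarith)).const_mul B
  refine (MeasureTheory.norm_integral_le_of_norm_le h1 ?_).trans ?_
  · filter_upwards [ae_restrict_mem measurableSet_Ioi] with u hu
    exact norm_term_le hB (hX.trans (le_of_lt hu)) z
  · rw [MeasureTheory.integral_const_mul, integral_Ioi_rpow_of_lt (by linarith) (by linarith)]
    apply le_of_eq; congr 1; rw [sub_add_cancel, neg_div_neg_eq]

lemma fin_integrable {g : ℝ → ℂ} (hg : Measurable g) {B : ℝ} (hB : ∀ u, 1 ≤ u → ‖g u‖ ≤ B)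
    (z : ℂ) {X : ℝ} :
    IntegrableOn (fun u : ℝ => g u * (u : ℂ) ^ (-(z + 1))) (Ioc 1 X) := by
  have h1 : IntegrableOn (fun u : ℝ => B * u ^ (-z.re - 1)) (Ioc 1 X) := by
    refine (ContinuousOn.integrableOn_Icc ?_).mono_set Ioc_subset_Icc_self
    refine continuousOn_const.mul (continuousOn_id.rpow_const ?_)
    intro x hx; left; have := hx.1; simp; linarith
  refine Integrable.mono' h1 (term_meas hg z).aestronglyMeasurable ?_
  filter_upwards [ae_restrict_mem measurableSet_Ioc] with u hu
  exact norm_term_le hB (le_of_lt hu.1) z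

lemma fin_bound {g : ℝ → ℂ} {B : ℝ} (hB : ∀ u, 1 ≤ u → ‖g u‖ ≤ B)
    {z : ℂ} (hz : z.re < 0) {X : ℝ} (hX : 1 ≤ X) :
    ‖∫ u in Ioc 1 X, g u * (u : ℂ) ^ (-(z + 1))‖ ≤ B * (X ^ (-z.re) / (-z.re)) := by
  have hB0 : 0 ≤ B := (norm_nonneg _).trans (hB 1 le_rfl)
  have h1 : IntegrableOn (fun u : ℝ => B * u ^ (-z.re - 1)) (Ioc 1 X) := by
    refine (ContinuousOn.integrableOn_Icc ?_).mono_set Ioc_subset_Icc_self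
    refine continuousOn_const.mul (continuousOn_id.rpow_const ?_)
    intro x hx; left; have := hx.1; simp; linarith
  refine (MeasureTheory.norm_integral_le_of_norm_le h1 ?_).trans ?_
  · filter_upwards [ae_restrict_mem measurableSet_Ioc] with u hu
    exact norm_term_le hB (le_of_lt hu.1) z
  · rw [MeasureTheory.integral_const_mul, ← intervalIntegral.integral_of_le hX,
      integral_rpow (by left; linarith)]
    rw [sub_add_cancel]
    gcongr
    · linarith
    · simp

lemma mel_diff {g : ℝ → ℂ} (hg : Measurable g) {B : ℝ} (hB : ∀ u, 1 ≤ u → ‖g u‖ ≤ B)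
    {z : ℂ} (hz : 0 < z.re) :
    DifferentiableAt ℂ (fun z : ℂ => ∫ u in Ioi (1:ℝ), g u * (u : ℂ) ^ (-(z + 1))) z := by
  set f : ℝ → ℂ := (Ioi (1:ℝ)).indicator g with hf
  have hfB : ∀ u, ‖f u‖ ≤ B := by
    intro u
    by_cases h : u ∈ Ioi (1:ℝ)
    · rw [hf, indicator_of_mem h]; exact hB u (le_of_lt h)
    · rw [hf, indicator_of_notMem h]; simpa using (norm_nonneg _).trans (hB 1 le_rfl)
  have hfm : Measurable f := hg.indicator measurableSet_Ioi
  have e : (fun z : ℂ => ∫ u in Ioi (1:ℝ), g u * (u : ℂ) ^ (-(z + 1))) =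
      fun z => mellin f (-z) := by
    ext z
    rw [mellin]
    have : (fun t : ℝ => (t:ℂ) ^ (-z - 1) • f t) =
        (Ioi (1:ℝ)).indicator (fun u => g u * (u : ℂ) ^ (-(z + 1))) := by
      ext u
      by_cases h : u ∈ Ioi (1:ℝ)
      · rw [hf, indicator_of_mem h, indicator_of_mem h, smul_eq_mul, mul_comm]; congr 2; ring
      · rw [hf, indicator_of_notMem h, indicator_of_notMem h]; simp
    rw [this, setIntegral_indicator measurableSet_Ioi]
    congr 2
    rw [Ioi_inter_Ioi]; simp
  rw [e]
  have hmain : DifferentiableAt ℂ (mellin f) (-z) := by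
    refine mellin_differentiableAt_of_isBigO_rpow (a := 0) (b := -z.re - 1) ?_ ?_ ?_ ?_ ?_
    · apply LocallyIntegrable.locallyIntegrableOn
      refine (locallyIntegrable_const B).mono hfm.aestronglyMeasurable ?_
      exact Eventually.of_forall fun u => (hfB u).trans (le_abs_self B)
    · refine IsBigO.of_bound B (Eventually.of_forall fun u => ?_)
      simpa using hfB u
    · simpa using hz
    · refine IsBigO.of_bound 1 ?_
      filter_upwards [mem_nhdsWithin_of_mem_nhds (Iio_mem_nhds (zero_lt_one' ℝ))] with u hu
      have : f u = 0 := by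
        rw [hf, indicator_of_notMem]; simpa using le_of_lt hu
      rw [this]; simp
    · simp
  exact hmain.comp z differentiable_neg.differentiableAt

lemma fin_diff {g : ℝ → ℂ} (hg : Measurable g) {B : ℝ} (hB : ∀ u, 1 ≤ u → ‖g u‖ ≤ B) (X : ℝ) :
    Differentiable ℂ (fun z : ℂ => ∫ u in Ioc (1:ℝ) X, g u * (u : ℂ) ^ (-(z + 1))) := by
  -- shift: write u^{-(z+1)} = u^{-(z+c+1)} u^c with c large
  intro z
  obtain ⟨n, hn⟩ := exists_nat_gt (-z.re)
  set G : ℝ → ℂ := (Iic X).indicator (fun u => g u * (u:ℂ) ^ n) with hG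
  have hGm : Measurable G := (by fun_prop : Measurable (fun u => g u * (u:ℂ) ^ n)).indicator
    measurableSet_Iic
  have hB0 : 0 ≤ B := (norm_nonneg _).trans (hB 1 le_rfl)
  have hGB : ∀ u, 1 ≤ u → ‖G u‖ ≤ B * |X| ^ n := by
    intro u hu
    by_cases h : u ∈ Iic X
    · rw [hG, indicator_of_mem h, norm_mul, norm_pow]
      have h' : u ≤ X := h
      have : ‖(u:ℂ)‖ ≤ |X| := by
        rw [norm_real, Real.norm_eq_abs, abs_of_nonneg (by linarith), abs_of_nonneg (by linarith)]
        exact h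
      have := hB u hu
      gcongr
    · rw [hG, indicator_of_notMem h]; simp; positivity
  have hd := mel_diff hGm hGB (z := z + n) (by simp; linarith)
  have e : (fun z : ℂ => ∫ u in Ioc (1:ℝ) X, g u * (u : ℂ) ^ (-(z + 1))) =
      (fun z : ℂ => ∫ u in Ioi (1:ℝ), G u * (u : ℂ) ^ (-(z + 1))) ∘ (fun z => z + n) := by
    ext z
    simp only [Function.comp]
    have : ∀ u : ℝ, G u * (u : ℂ) ^ (-(z + n + 1)) =
      (Iic X).indicator (fun u => g u * (u:ℂ) ^ n * (u : ℂ) ^ (-(z + n + 1))) u := by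
      intro u
      by_cases h : u ∈ Iic X
      · rw [hG, indicator_of_mem h, indicator_of_mem h]
      · rw [hG, indicator_of_notMem h, indicator_of_notMem h, zero_mul]
    simp_rw [this]
    rw [setIntegral_indicator measurableSet_Iic, Ioi_inter_Iic]
    refine setIntegral_congr_fun measurableSet_Ioc fun u hu => ?_
    have hu0 : (u:ℂ) ≠ 0 := by
      have := hu.1
      exact_mod_cast (by linarith : (0:ℝ) < u).ne'
    simp only [mul_assoc]
    rw [← cpow_natCast, ← cpow_add _ _ hu0]; congr 2; ring
  rw [e]
  exact DifferentiableAt.comp z hd (by fun_prop)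

/-- value of the kernel on horizontal edges -/
lemma ker_hor {x R c : ℝ} (hR : 0 < R) (hc : c ^ 2 = R ^ 2) (hx : |x| ≤ R) :
    ‖(1 + ((x:ℂ) + (c:ℝ) * I) ^ 2 / (R:ℂ) ^ 2) * ((x:ℂ) + (c:ℝ) * I)⁻¹‖ ≤ 3 * |x| / R ^ 2 := by
  have hcR : |c| = R := by rw [← abs_of_pos hR]; exact (sq_eq_sq_iff_abs_eq_abs _ _).1 hc
  have hR' : (R:ℂ) ≠ 0 := by exact_mod_cast hR.ne'
  have hcc : ((c:ℝ):ℂ) ^ 2 = (R:ℂ) ^ 2 := by exact_mod_cast hc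
  have e : 1 + ((x:ℂ) + (c:ℝ) * I) ^ 2 / (R:ℂ) ^ 2 = x * (x + 2 * c * I) / (R:ℂ) ^ 2 := by
    field_simp
    linear_combination (c:ℂ) ^ 2 * I_sq - hcc
  rw [e, norm_mul, norm_inv, norm_div, norm_mul]
  have h1 : ‖(x:ℂ) + 2 * c * I‖ ≤ 3 * R := by
    refine (norm_add_le _ _).trans ?_
    simp [hcR]; linarith
  have h2 : R ≤ ‖(x:ℂ) + (c:ℝ) * I‖ := by
    have := abs_im_le_norm ((x:ℂ) + (c:ℝ) * I)
    simpa [hcR] using this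
  have h3 : ‖(x:ℂ) + (c:ℝ) * I‖⁻¹ ≤ R⁻¹ := inv_anti₀ hR h2
  have h4 : ‖(R:ℂ) ^ 2‖ = R ^ 2 := by simp
  rw [h4, norm_real, Real.norm_eq_abs]
  calc |x| * ‖(x:ℂ) + 2 * c * I‖ / R ^ 2 * ‖(x:ℂ) + (c:ℝ) * I‖⁻¹
      ≤ |x| * (3 * R) / R ^ 2 * R⁻¹ := by gcongr
    _ = 3 * |x| / R ^ 2 := by field_simp

lemma ker_ver {c y R : ℝ} (hR : 0 < R) (hc : |c| ≤ R) (hc0 : c ≠ 0) (hy : |y| ≤ R) :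
    ‖(1 + ((c:ℂ) + (y:ℝ) * I) ^ 2 / (R:ℂ) ^ 2) * ((c:ℂ) + (y:ℝ) * I)⁻¹‖ ≤ 3 / |c| := by
  rw [norm_mul, norm_inv]
  have h2 : |c| ≤ ‖(c:ℂ) + (y:ℝ) * I‖ := by
    simpa using abs_re_le_norm ((c:ℂ) + (y:ℝ) * I)
  have hc1 : 0 < |c| := abs_pos.2 hc0
  have h3 : ‖(c:ℂ) + (y:ℝ) * I‖⁻¹ ≤ |c|⁻¹ := inv_anti₀ hc1 h2
  have h1 : ‖1 + ((c:ℂ) + (y:ℝ) * I) ^ 2 / (R:ℂ) ^ 2‖ ≤ 3 := by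
    refine (norm_add_le _ _).trans ?_
    have : ‖((c:ℂ) + (y:ℝ) * I) ^ 2 / (R:ℂ) ^ 2‖ ≤ 2 := by
      rw [norm_div, norm_pow, ← normSq_eq_norm_sq, normSq_add_mul_I]
      have h4 : ‖(R:ℂ) ^ 2‖ = R ^ 2 := by simp
      rw [h4, div_le_iff₀ (by positivity)]
      nlinarith [sq_abs c, sq_abs y, abs_nonneg c, abs_nonneg y]
    rw [norm_one]; linarith
  calc _ ≤ 3 * |c|⁻¹ := mul_le_mul h1 h3 (by positivity) (by norm_num)
    _ = 3 / |c| := (div_eq_mul_inv _ _).symm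
end PieceB

section PieceC
open Complex Set MeasureTheory intervalIntegral Filter Topology Asymptotics

lemma newman {g : ℝ → ℂ} (hg : Measurable g) {B : ℝ} (hB : ∀ u, 1 ≤ u → ‖g u‖ ≤ B)
    {F : ℂ → ℂ} {U : Set ℂ} (hU : IsOpen U) {δ R M X : ℝ} (hδ : 0 < δ) (hδ1 : δ ≤ 1) (hR : 1 ≤ R)
    (hX : 1 ≤ X) (hsub : Icc (-δ) R ×ℂ Icc (-R) R ⊆ U) (hF : DifferentiableOn ℂ F U)
    (hFint : ∀ z : ℂ, 0 < z.re → F z = ∫ u in Ioi (1:ℝ), g u * (u : ℂ) ^ (-(z + 1)))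
    (hM : ∀ z : ℂ, -δ ≤ z.re → z.re ≤ 0 → |z.im| ≤ R → ‖F z‖ ≤ M) :
    ‖F 0 - ∫ u in Ioc 1 X, g u * (u : ℂ) ^ (-((0:ℂ) + 1))‖ ≤
      4 * (B / R + M / R ^ 2 + M * R / δ * Real.exp (-δ * Real.log X)) := by
  have hR0 : 0 < R := by linarith
  have hB0 : 0 ≤ B := (norm_nonneg _).trans (hB 1 le_rfl)
  have hM0 : 0 ≤ M := (norm_nonneg _).trans (hM 0 (by simpa using hδ.le) (by simp) (by simpa using hR0.le))
  set L := Real.log X with hL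
  have hX0 : 0 < X := by linarith
  have hXp : ∀ x : ℝ, X ^ x = Real.exp (x * L) := fun x => by
    rw [Real.rpow_def_of_pos hX0, mul_comm]
  set FX : ℂ → ℂ := fun z => ∫ u in Ioc 1 X, g u * (u : ℂ) ^ (-(z + 1)) with hFX
  set K : ℂ → ℂ := fun z => Complex.exp (z * L) * (1 + z ^ 2 / (R:ℂ) ^ 2) with hK
  have hKd : Differentiable ℂ K := by rw [hK]; fun_prop
  have hK0 : K 0 = 1 := by simp [hK]
  have hFXd : Differentiable ℂ FX := fin_diff hg hB X
  have c1 := rectInt_pole (H := fun z => F z * K z) hU (a := -δ) (b := R) (R := R) (by linarith)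
    hR0 hR0 hsub (hF.mul hKd.differentiableOn)
  have c2 := rectInt_pole (H := fun z => FX z * K z) isOpen_univ (a := -R) (b := R) (R := R)
    (by linarith) hR0 hR0 (subset_univ _) (hFXd.mul hKd).differentiableOn
  -- kernel bounds
  have kh : ∀ x c : ℝ, c ^ 2 = R ^ 2 → |x| ≤ R →
      ‖K (x + (c:ℝ) * I) * ((x:ℂ) + (c:ℝ) * I)⁻¹‖ ≤ Real.exp (x * L) * (3 * |x| / R ^ 2) := by
    intro x c hc hx
    rw [hK]; dsimp only
    rw [mul_assoc, norm_mul, norm_exp]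
    have : (((x:ℂ) + (c:ℝ) * I) * L).re = x * L := by simp
    rw [this]
    exact mul_le_mul_of_nonneg_left (ker_hor hR0 hc hx) (by positivity)
  have kv : ∀ c y : ℝ, c ≠ 0 → |c| ≤ R → |y| ≤ R →
      ‖K (c + (y:ℝ) * I) * ((c:ℂ) + (y:ℝ) * I)⁻¹‖ ≤ Real.exp (c * L) * (3 / |c|) := by
    intro c y hc0 hc hy
    rw [hK]; dsimp only
    rw [mul_assoc, norm_mul, norm_exp]
    have : (((c:ℂ) + (y:ℝ) * I) * L).re = c * L := by simp
    rw [this]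
    exact mul_le_mul_of_nonneg_left (ker_ver hR0 hc hc0 hy) (by positivity)
  -- F - FX on the right
  have hdiff : ∀ z : ℂ, 0 < z.re → ‖F z - FX z‖ ≤ B * (Real.exp (-z.re * L) / z.re) := by
    intro z hz
    have : F z - FX z = ∫ u in Ioi X, g u * (u : ℂ) ^ (-(z + 1)) := by
      rw [hFint z hz, hFX]; dsimp only
      rw [← Ioc_union_Ioi_eq_Ioi hX, setIntegral_union (Ioc_disjoint_Ioi le_rfl) measurableSet_Ioi
        (fin_integrable hg hB z) (term_integrable hg hB hz hX)]
      ring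
    rw [this, ← hXp]
    exact tail_bound hB hz hX
  have hleft : ∀ z : ℂ, z.re < 0 → ‖FX z‖ ≤ B * (Real.exp (-z.re * L) / (-z.re)) := by
    intro z hz
    rw [← hXp]; exact fin_bound hB hz hX
  -- edges
  have sqneg : (-R) ^ 2 = R ^ 2 := by ring
  have E1 : ∀ c : ℝ, c ^ 2 = R ^ 2 →
      ‖∫ x : ℝ in (0:ℝ)..R, (F (x + (c:ℝ) * I) - FX (x + (c:ℝ) * I)) * K (x + (c:ℝ) * I) *
        ((x:ℂ) + (c:ℝ) * I)⁻¹‖ ≤ 3 * B / R := by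
    intro c hc
    have : ∀ x ∈ uIoc (0:ℝ) R, ‖(F (x + (c:ℝ) * I) - FX (x + (c:ℝ) * I)) * K (x + (c:ℝ) * I) *
        ((x:ℂ) + (c:ℝ) * I)⁻¹‖ ≤ 3 * B / R ^ 2 := by
      intro x hx
      rw [uIoc_of_le hR0.le] at hx
      have h1 := hdiff (x + (c:ℝ) * I) (by simpa using hx.1)
      have h2 := kh x c hc (by rw [abs_of_pos hx.1]; exact hx.2)
      have hre : ((x:ℂ) + (c:ℝ) * I).re = x := by simp
      rw [hre] at h1
      rw [mul_assoc, norm_mul]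
      have hx0 := hx.1
      calc _ ≤ B * (Real.exp (-x * L) / x) * (Real.exp (x * L) * (3 * |x| / R ^ 2)) :=
            mul_le_mul h1 h2 (norm_nonneg _) (by positivity)
        _ = (Real.exp (-x * L) * Real.exp (x * L)) * (3 * B / R ^ 2) := by
            rw [abs_of_pos hx0]; field_simp
        _ = 3 * B / R ^ 2 := by rw [← Real.exp_add]; simp
    refine (intervalIntegral.norm_integral_le_of_norm_le_const this).trans (le_of_eq ?_)
    rw [sub_zero, abs_of_pos hR0]; field_simp
  have E2 : ‖∫ y : ℝ in (-R)..R, (F (R + (y:ℝ) * I) - FX (R + (y:ℝ) * I)) * K (R + (y:ℝ) * I) *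
        ((R:ℂ) + (y:ℝ) * I)⁻¹‖ ≤ 6 * B / R := by
    have : ∀ y ∈ uIoc (-R) R, ‖(F (R + (y:ℝ) * I) - FX (R + (y:ℝ) * I)) * K (R + (y:ℝ) * I) *
        ((R:ℂ) + (y:ℝ) * I)⁻¹‖ ≤ 3 * B / R ^ 2 := by
      intro y hy
      rw [uIoc_of_le (by linarith)] at hy
      have h1 := hdiff (R + (y:ℝ) * I) (by simpa using hR0)
      have h2 := kv R y hR0.ne' (by rw [abs_of_pos hR0]) (abs_le.2 ⟨hy.1.le, hy.2⟩)
      have hre : ((R:ℂ) + (y:ℝ) * I).re = R := by simp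
      rw [hre] at h1
      rw [mul_assoc, norm_mul]
      calc _ ≤ B * (Real.exp (-R * L) / R) * (Real.exp (R * L) * (3 / |R|)) :=
            mul_le_mul h1 h2 (norm_nonneg _) (by positivity)
        _ = (Real.exp (-R * L) * Real.exp (R * L)) * (3 * B / R ^ 2) := by
            rw [abs_of_pos hR0]; field_simp
        _ = 3 * B / R ^ 2 := by rw [← Real.exp_add]; simp
    refine (intervalIntegral.norm_integral_le_of_norm_le_const this).trans (le_of_eq ?_)
    rw [abs_of_pos (by linarith)]; field_simp; ring
  have E3 : ∀ c : ℝ, c ^ 2 = R ^ 2 →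
      ‖∫ x : ℝ in (-R)..0, FX (x + (c:ℝ) * I) * K (x + (c:ℝ) * I) *
        ((x:ℂ) + (c:ℝ) * I)⁻¹‖ ≤ 3 * B / R := by
    intro c hc
    have : ∀ x ∈ uIoc (-R) 0, ‖FX (x + (c:ℝ) * I) * K (x + (c:ℝ) * I) *
        ((x:ℂ) + (c:ℝ) * I)⁻¹‖ ≤ 3 * B / R ^ 2 := by
      intro x hx
      rw [uIoc_of_le (by linarith)] at hx
      have h2 := kh x c hc (by rw [abs_of_nonpos hx.2]; linarith [hx.1])
      rw [mul_assoc, norm_mul]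
      rcases eq_or_lt_of_le hx.2 with h0 | hx0
      · subst h0
        have : ‖K ((0:ℝ) + (c:ℝ) * I) * (((0:ℝ):ℂ) + (c:ℝ) * I)⁻¹‖ = 0 :=
          le_antisymm (by simpa using h2) (norm_nonneg _)
        rw [this, mul_zero]; positivity
      have h1 := hleft (x + (c:ℝ) * I) (by simpa using hx0)
      have hre : ((x:ℂ) + (c:ℝ) * I).re = x := by simp
      rw [hre] at h1
      have hx1 : 0 < -x := by linarith
      calc _ ≤ B * (Real.exp (-x * L) / (-x)) * (Real.exp (x * L) * (3 * |x| / R ^ 2)) :=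
            mul_le_mul h1 h2 (norm_nonneg _) (by positivity)
        _ = (Real.exp (-x * L) * Real.exp (x * L)) * (3 * B / R ^ 2) := by
            have hxne : x ≠ 0 := hx0.ne
            rw [abs_of_neg hx0]; field_simp
        _ = 3 * B / R ^ 2 := by rw [← Real.exp_add]; simp
    refine (intervalIntegral.norm_integral_le_of_norm_le_const this).trans (le_of_eq ?_)
    rw [sub_neg_eq_add, zero_add, abs_of_pos hR0]; field_simp
  have E4 : ‖∫ y : ℝ in (-R)..R, FX ((-R:ℝ) + (y:ℝ) * I) * K ((-R:ℝ) + (y:ℝ) * I) *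
        (((-R:ℝ):ℂ) + (y:ℝ) * I)⁻¹‖ ≤ 6 * B / R := by
    have : ∀ y ∈ uIoc (-R) R, ‖FX ((-R:ℝ) + (y:ℝ) * I) * K ((-R:ℝ) + (y:ℝ) * I) *
        (((-R:ℝ):ℂ) + (y:ℝ) * I)⁻¹‖ ≤ 3 * B / R ^ 2 := by
      intro y hy
      rw [uIoc_of_le (by linarith)] at hy
      have hre : (((-R:ℝ):ℂ) + (y:ℝ) * I).re = -R := by simp
      have h1 := hleft ((-R:ℝ) + (y:ℝ) * I) (by rw [hre]; linarith)
      have h2 := kv (-R) y (by linarith) (by rw [abs_neg, abs_of_pos hR0])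
        (abs_le.2 ⟨hy.1.le, hy.2⟩)
      rw [hre] at h1
      rw [mul_assoc, norm_mul]
      calc _ ≤ B * (Real.exp (-(-R) * L) / (-(-R))) * (Real.exp ((-R) * L) * (3 / |(-R)|)) :=
            mul_le_mul h1 h2 (norm_nonneg _) (by rw [neg_neg]; positivity)
        _ = (Real.exp (-(-R) * L) * Real.exp ((-R) * L)) * (3 * B / R ^ 2) := by
            rw [abs_neg, abs_of_pos hR0, neg_neg]; field_simp
        _ = 3 * B / R ^ 2 := by rw [← Real.exp_add]; simp
    refine (intervalIntegral.norm_integral_le_of_norm_le_const this).trans (le_of_eq ?_)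
    rw [abs_of_pos (by linarith)]; field_simp; ring
  have hLn : 0 ≤ L := Real.log_nonneg hX
  have E5 : ∀ c : ℝ, c ^ 2 = R ^ 2 →
      ‖∫ x : ℝ in (-δ)..0, F (x + (c:ℝ) * I) * K (x + (c:ℝ) * I) *
        ((x:ℂ) + (c:ℝ) * I)⁻¹‖ ≤ 3 * M / R ^ 2 := by
    intro c hc
    have hcR : |c| = R := by rw [← abs_of_pos hR0]; exact (sq_eq_sq_iff_abs_eq_abs _ _).1 hc
    have : ∀ x ∈ uIoc (-δ) 0, ‖F (x + (c:ℝ) * I) * K (x + (c:ℝ) * I) *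
        ((x:ℂ) + (c:ℝ) * I)⁻¹‖ ≤ 3 * M / R ^ 2 := by
      intro x hx
      rw [uIoc_of_le (by linarith)] at hx
      have hxa : |x| ≤ 1 := by rw [abs_of_nonpos hx.2]; linarith [hx.1]
      have h2 := kh x c hc (hxa.trans hR)
      have h1 := hM (x + (c:ℝ) * I) (by simpa using hx.1.le) (by simpa using hx.2)
        (by simp [hcR])
      rw [mul_assoc, norm_mul]
      have he : Real.exp (x * L) ≤ 1 := Real.exp_le_one_iff.2 (mul_nonpos_of_nonpos_of_nonneg hx.2 hLn)
      calc _ ≤ M * (Real.exp (x * L) * (3 * |x| / R ^ 2)) :=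
            mul_le_mul h1 h2 (norm_nonneg _) hM0
        _ ≤ M * (1 * (3 * 1 / R ^ 2)) := by gcongr
        _ = 3 * M / R ^ 2 := by ring
    refine (intervalIntegral.norm_integral_le_of_norm_le_const this).trans ?_
    rw [sub_neg_eq_add, zero_add, abs_of_pos hδ]
    exact mul_le_of_le_one_right (by positivity) hδ1
  have E6 : ‖∫ y : ℝ in (-R)..R, F ((-δ:ℝ) + (y:ℝ) * I) * K ((-δ:ℝ) + (y:ℝ) * I) *
        (((-δ:ℝ):ℂ) + (y:ℝ) * I)⁻¹‖ ≤ 6 * (M * R / δ * Real.exp (-δ * L)) := by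
    have : ∀ y ∈ uIoc (-R) R, ‖F ((-δ:ℝ) + (y:ℝ) * I) * K ((-δ:ℝ) + (y:ℝ) * I) *
        (((-δ:ℝ):ℂ) + (y:ℝ) * I)⁻¹‖ ≤ M * (Real.exp (-δ * L) * (3 / δ)) := by
      intro y hy
      rw [uIoc_of_le (by linarith)] at hy
      have hre : (((-δ:ℝ):ℂ) + (y:ℝ) * I).re = -δ := by simp
      have hya : |y| ≤ R := abs_le.2 ⟨hy.1.le, hy.2⟩
      have h1 := hM ((-δ:ℝ) + (y:ℝ) * I) (by rw [hre]) (by rw [hre]; linarith)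
        (by simpa using hya)
      have h2 := kv (-δ) y (by linarith) (by rw [abs_neg, abs_of_pos hδ]; linarith) hya
      rw [abs_neg, abs_of_pos hδ] at h2
      rw [mul_assoc, norm_mul]
      exact mul_le_mul h1 h2 (norm_nonneg _) hM0
    refine (intervalIntegral.norm_integral_le_of_norm_le_const this).trans (le_of_eq ?_)
    rw [abs_of_pos (by linarith)]; field_simp; ring
  -- integrability
  have hmem : ∀ x c : ℝ, -δ ≤ x → x ≤ R → -R ≤ c → c ≤ R → ((x:ℂ) + (c:ℝ) * I) ∈ U := by
    intro x c h1 h2 h3 h4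
    apply hsub; simp [mem_reProdIm]; exact ⟨⟨h1, h2⟩, h3, h4⟩
  have iF : ∀ c a b : ℝ, c ^ 2 = R ^ 2 → -δ ≤ a → a ≤ b → b ≤ R → IntervalIntegrable
      (fun x : ℝ => F (x + (c:ℝ) * I) * K (x + (c:ℝ) * I) * ((x:ℂ) + (c:ℝ) * I)⁻¹) volume a b := by
    intro c a b hc ha hab hb
    have hcR : |c| = R := by rw [← abs_of_pos hR0]; exact (sq_eq_sq_iff_abs_eq_abs _ _).1 hc
    have hc' := abs_le.1 hcR.le
    have hc0 : c ≠ 0 := by intro h; rw [h] at hcR; simp at hcR; linarith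
    apply ContinuousOn.intervalIntegrable
    rw [uIcc_of_le hab]
    refine ContinuousOn.mul (ContinuousOn.mul ?_ ?_) ?_
    · exact hF.continuousOn.comp (by fun_prop) (fun x hx => hmem x c (ha.trans hx.1)
        (hx.2.trans hb) hc'.1 hc'.2)
    · exact (hKd.continuous.comp (by fun_prop)).continuousOn
    · exact (Continuous.inv₀ (by fun_prop) (fun x => pt_ne_zero_of_im hc0)).continuousOn
  have iFX : ∀ c a b : ℝ, c ^ 2 = R ^ 2 → IntervalIntegrable
      (fun x : ℝ => FX (x + (c:ℝ) * I) * K (x + (c:ℝ) * I) * ((x:ℂ) + (c:ℝ) * I)⁻¹) volume a b := by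
    intro c a b hc
    have hcR : |c| = R := by rw [← abs_of_pos hR0]; exact (sq_eq_sq_iff_abs_eq_abs _ _).1 hc
    have hc0 : c ≠ 0 := by intro h; rw [h] at hcR; simp at hcR; linarith
    apply Continuous.intervalIntegrable
    refine ((hFXd.continuous.comp (by fun_prop)).mul (hKd.continuous.comp (by fun_prop))).mul ?_
    exact (Continuous.inv₀ (by fun_prop) (fun x => pt_ne_zero_of_im hc0))
  have hsplit : ∀ c : ℝ, c ^ 2 = R ^ 2 →
      (∫ x : ℝ in (-δ)..R, F (x + (c:ℝ) * I) * K (x + (c:ℝ) * I) * ((x:ℂ) + (c:ℝ) * I)⁻¹) -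
      (∫ x : ℝ in (-R)..R, FX (x + (c:ℝ) * I) * K (x + (c:ℝ) * I) * ((x:ℂ) + (c:ℝ) * I)⁻¹) =
      (∫ x : ℝ in (0:ℝ)..R, (F (x + (c:ℝ) * I) - FX (x + (c:ℝ) * I)) * K (x + (c:ℝ) * I) *
        ((x:ℂ) + (c:ℝ) * I)⁻¹) +
      (∫ x : ℝ in (-δ)..0, F (x + (c:ℝ) * I) * K (x + (c:ℝ) * I) * ((x:ℂ) + (c:ℝ) * I)⁻¹) -
      (∫ x : ℝ in (-R)..0, FX (x + (c:ℝ) * I) * K (x + (c:ℝ) * I) * ((x:ℂ) + (c:ℝ) * I)⁻¹) := by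
    intro c hc
    rw [← integral_add_adjacent_intervals (iF c (-δ) 0 hc le_rfl (by linarith) hR0.le)
      (iF c 0 R hc (by linarith) hR0.le le_rfl),
      ← integral_add_adjacent_intervals (iFX c (-R) 0 hc) (iFX c 0 R hc)]
    have : (∫ x : ℝ in (0:ℝ)..R, (F (x + (c:ℝ) * I) - FX (x + (c:ℝ) * I)) * K (x + (c:ℝ) * I) *
        ((x:ℂ) + (c:ℝ) * I)⁻¹) =
        (∫ x : ℝ in (0:ℝ)..R, F (x + (c:ℝ) * I) * K (x + (c:ℝ) * I) * ((x:ℂ) + (c:ℝ) * I)⁻¹) -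
        ∫ x : ℝ in (0:ℝ)..R, FX (x + (c:ℝ) * I) * K (x + (c:ℝ) * I) * ((x:ℂ) + (c:ℝ) * I)⁻¹ := by
      rw [← intervalIntegral.integral_sub (iF c 0 R hc (by linarith) hR0.le le_rfl) (iFX c 0 R hc)]
      congr 1; ext x; ring
    rw [this]; ring
  have hvert : (∫ y : ℝ in (-R)..R, F (R + (y:ℝ) * I) * K (R + (y:ℝ) * I) * ((R:ℂ) + (y:ℝ) * I)⁻¹) -
      (∫ y : ℝ in (-R)..R, FX (R + (y:ℝ) * I) * K (R + (y:ℝ) * I) * ((R:ℂ) + (y:ℝ) * I)⁻¹) =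
      ∫ y : ℝ in (-R)..R, (F (R + (y:ℝ) * I) - FX (R + (y:ℝ) * I)) * K (R + (y:ℝ) * I) *
        ((R:ℂ) + (y:ℝ) * I)⁻¹ := by
    rw [← intervalIntegral.integral_sub]
    · congr 1; ext y; ring
    · apply ContinuousOn.intervalIntegrable
      rw [uIcc_of_le (by linarith)]
      refine ContinuousOn.mul (ContinuousOn.mul ?_ ?_) ?_
      · exact hF.continuousOn.comp (by fun_prop) (fun y hy => hmem R y (by linarith) le_rfl hy.1 hy.2)
      · exact (hKd.continuous.comp (by fun_prop)).continuousOn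
      · exact (Continuous.inv₀ (by fun_prop) (fun x => pt_ne_zero_of_re hR0.ne')).continuousOn
    · apply Continuous.intervalIntegrable
      refine ((hFXd.continuous.comp (by fun_prop)).mul (hKd.continuous.comp (by fun_prop))).mul ?_
      exact (Continuous.inv₀ (by fun_prop) (fun x => pt_ne_zero_of_re hR0.ne'))
  unfold rectInt at c1 c2
  rw [hK0, mul_one] at c1 c2
  have s1 := hsplit R rfl
  have s2 := hsplit (-R) sqneg
  have key : 2 * Real.pi * I * (F 0 - FX 0) =
      ((∫ x : ℝ in (0:ℝ)..R, (F (x + (-R:ℝ) * I) - FX (x + (-R:ℝ) * I)) * K (x + (-R:ℝ) * I) *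
        ((x:ℂ) + (-R:ℝ) * I)⁻¹) +
      (∫ x : ℝ in (-δ)..0, F (x + (-R:ℝ) * I) * K (x + (-R:ℝ) * I) * ((x:ℂ) + (-R:ℝ) * I)⁻¹) -
      (∫ x : ℝ in (-R)..0, FX (x + (-R:ℝ) * I) * K (x + (-R:ℝ) * I) * ((x:ℂ) + (-R:ℝ) * I)⁻¹)) -
      ((∫ x : ℝ in (0:ℝ)..R, (F (x + (R:ℝ) * I) - FX (x + (R:ℝ) * I)) * K (x + (R:ℝ) * I) *
        ((x:ℂ) + (R:ℝ) * I)⁻¹) +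
      (∫ x : ℝ in (-δ)..0, F (x + (R:ℝ) * I) * K (x + (R:ℝ) * I) * ((x:ℂ) + (R:ℝ) * I)⁻¹) -
      (∫ x : ℝ in (-R)..0, FX (x + (R:ℝ) * I) * K (x + (R:ℝ) * I) * ((x:ℂ) + (R:ℝ) * I)⁻¹)) +
      I * (∫ y : ℝ in (-R)..R, (F (R + (y:ℝ) * I) - FX (R + (y:ℝ) * I)) * K (R + (y:ℝ) * I) *
        ((R:ℂ) + (y:ℝ) * I)⁻¹) -
      (I * (∫ y : ℝ in (-R)..R, F ((-δ:ℝ) + (y:ℝ) * I) * K ((-δ:ℝ) + (y:ℝ) * I) *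
        (((-δ:ℝ):ℂ) + (y:ℝ) * I)⁻¹) -
      I * (∫ y : ℝ in (-R)..R, FX ((-R:ℝ) + (y:ℝ) * I) * K ((-R:ℝ) + (y:ℝ) * I) *
        (((-R:ℝ):ℂ) + (y:ℝ) * I)⁻¹)) := by
    linear_combination c2 - c1 + s2 - s1 + I * hvert
  have e1a := E1 R rfl
  have e1b := E1 (-R) sqneg
  have e3a := E3 R rfl
  have e3b := E3 (-R) sqneg
  have e5a := E5 R rfl
  have e5b := E5 (-R) sqneg
  have hn := congrArg norm key
  have tri : ∀ a1 a2 a3 b1 b2 b3 v1 v2 v3 : ℂ,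
      ‖(a1 + a2 - a3) - (b1 + b2 - b3) + I * v1 - (I * v2 - I * v3)‖ ≤
      ‖a1‖ + ‖a2‖ + ‖a3‖ + ‖b1‖ + ‖b2‖ + ‖b3‖ + ‖v1‖ + ‖v2‖ + ‖v3‖ := by
    intro a1 a2 a3 b1 b2 b3 v1 v2 v3
    have n1 := norm_sub_le ((a1 + a2 - a3) - (b1 + b2 - b3) + I * v1) (I * v2 - I * v3)
    have n2 := norm_add_le ((a1 + a2 - a3) - (b1 + b2 - b3)) (I * v1)
    have n3 := norm_sub_le (a1 + a2 - a3) (b1 + b2 - b3)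
    have n4 := norm_sub_le (a1 + a2) a3
    have n5 := norm_sub_le (b1 + b2) b3
    have n6 := norm_add_le a1 a2
    have n7 := norm_add_le b1 b2
    have n8 := norm_sub_le (I * v2) (I * v3)
    simp only [norm_mul, norm_I, one_mul] at n1 n2 n8
    linarith
  have hfin := hn.le.trans (tri _ _ _ _ _ _ _ _ _)
  have hlhs : ‖2 * (Real.pi:ℂ) * I * (F 0 - FX 0)‖ = 2 * Real.pi * ‖F 0 - FX 0‖ := by
    simp [abs_of_pos Real.pi_pos]
  rw [hlhs] at hfin
  have hpi := Real.pi_gt_three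
  have h6 : 6 * ‖F 0 - FX 0‖ ≤ 2 * Real.pi * ‖F 0 - FX 0‖ := by
    have := norm_nonneg (F 0 - FX 0)
    nlinarith
  have q1 : 3 * B / R = 3 * (B / R) := by ring
  have q2 : 6 * B / R = 6 * (B / R) := by ring
  have q3 : 3 * M / R ^ 2 = 3 * (M / R ^ 2) := by ring
  rw [q1] at e1a e1b e3a e3b
  rw [q2] at E2 E4
  rw [q3] at e5a e5b
  have pos1 : 0 ≤ M / R ^ 2 := by positivity
  have pos2 : 0 ≤ M * R / δ * Real.exp (-δ * L) := by positivity
  change ‖F 0 - FX 0‖ ≤ _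
  linarith
end PieceC

section PieceD
open Complex Set MeasureTheory intervalIntegral Filter Topology Asymptotics

/-- the entire function `(s-1) ζ(s)` -/
noncomputable def Wz : ℂ → ℂ := Function.update (fun s => (s - 1) * riemannZeta s) 1 1

lemma Wz_of_ne {s : ℂ} (h : s ≠ 1) : Wz s = (s - 1) * riemannZeta s := by
  simp [Wz, Function.update_of_ne h]

lemma Wz_one : Wz 1 = 1 := by simp [Wz]

lemma Wz_diff : Differentiable ℂ Wz := by
  intro s
  rcases eq_or_ne s 1 with rfl | hs
  · refine (Complex.analyticAt_of_differentiable_on_punctured_nhds_of_continuousAt ?_ ?_).differentiableAt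
    · filter_upwards [self_mem_nhdsWithin] with s hs
      have : Wz =ᶠ[𝓝 s] fun s => (s - 1) * riemannZeta s := by
        filter_upwards [isOpen_ne.mem_nhds hs] with t ht using Wz_of_ne ht
      refine DifferentiableAt.congr_of_eventuallyEq ?_ this
      exact (by fun_prop : DifferentiableAt ℂ (fun s : ℂ => s - 1) s).mul (differentiableAt_riemannZeta hs)
    · rw [Wz, continuousAt_update_same]
      exact riemannZeta_residue_one
  · have : Wz =ᶠ[𝓝 s] fun s => (s - 1) * riemannZeta s := by
      filter_upwards [isOpen_ne.mem_nhds hs] with t ht using Wz_of_ne ht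
    refine DifferentiableAt.congr_of_eventuallyEq ?_ this
    exact (by fun_prop : DifferentiableAt ℂ (fun s : ℂ => s - 1) s).mul (differentiableAt_riemannZeta hs)

lemma Wz_ne_zero {s : ℂ} (hs : 1 ≤ s.re) : Wz s ≠ 0 := by
  rcases eq_or_ne s 1 with rfl | h
  · rw [Wz_one]; exact one_ne_zero
  · rw [Wz_of_ne h]; exact mul_ne_zero (sub_ne_zero.2 h) (riemannZeta_ne_zero_of_one_le_re hs)

/-- fractional part, complex-valued -/
noncomputable def fr (u : ℝ) : ℂ := ((Int.fract u : ℝ) : ℂ)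

lemma fr_meas : Measurable fr := by unfold fr; exact (measurable_fract).complex_ofReal

lemma fr_bound : ∀ u : ℝ, 1 ≤ u → ‖fr u‖ ≤ 1 := by
  intro u _
  rw [fr, norm_real, Real.norm_eq_abs, abs_of_nonneg (Int.fract_nonneg u)]
  exact (Int.fract_lt_one u).le

lemma zeta_formula_aux {s : ℂ} (hs : 1 < s.re) :
    riemannZeta s = s / (s - 1) - s * ∫ u in Ioi (1:ℝ), fr u * (u:ℂ) ^ (-(s + 1)) := by
  have h := LSeries_eq_mul_integral_of_nonneg (fun _ => (1:ℝ)) (r := 1) zero_le_one (s := s) hs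
    (by simp; exact isBigO_refl _ _) (fun _ => zero_le_one)
  have h2 : LSeries (fun _ => ((1:ℝ):ℂ)) s = riemannZeta s := by
    rw [← LSeries_one_eq_riemannZeta hs]; simp [Pi.one_def]
  rw [h2] at h
  rw [h]
  have hs1 : s - 1 ≠ 0 := by
    intro h0; have := congrArg Complex.re h0; simp at this; linarith
  have i1 : ∫ u in Ioi (1:ℝ), (u:ℂ) ^ (-s) = 1 / (s - 1) := by
    rw [integral_Ioi_cpow_of_lt (by simpa using hs) zero_lt_one]
    have : -s + 1 ≠ 0 := by intro h0; apply hs1; linear_combination -h0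
    simp only [ofReal_one, one_cpow]
    field_simp; ring
  have e : ∫ u in Ioi (1:ℝ), (∑ k ∈ Finset.Icc 1 ⌊u⌋₊, ((1:ℝ):ℂ)) * (u:ℂ) ^ (-(s + 1)) =
      ∫ u in Ioi (1:ℝ), ((u:ℂ) ^ (-s) - fr u * (u:ℂ) ^ (-(s + 1))) := by
    refine setIntegral_congr_fun measurableSet_Ioi fun u hu => ?_
    have hu1 : (1:ℝ) < u := hu
    have hu0 : (u:ℂ) ≠ 0 := by exact_mod_cast (by linarith : (0:ℝ) < u).ne'
    have hfl : ((⌊u⌋₊ : ℕ) : ℝ) = u - Int.fract u := by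
      rw [natCast_floor_eq_intCast_floor (by linarith)]; rw [Int.self_sub_fract]
    have hfl2 : ((⌊u⌋₊ : ℕ) : ℂ) = u - fr u := by
      rw [fr]; exact_mod_cast congrArg (fun x : ℝ => (x:ℂ)) hfl
    have hp : (u:ℂ) ^ (-s) = u * (u:ℂ) ^ (-(s + 1)) := by
      have : -s = 1 + -(s + 1) := by ring
      rw [this, cpow_add _ _ hu0, cpow_one]
    simp only [Finset.sum_const, Nat.card_Icc, add_tsub_cancel_right, ofReal_one, nsmul_eq_mul, mul_one]
    rw [hfl2, hp]; ring
  rw [e, MeasureTheory.integral_sub, i1]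
  · ring
  · exact integrableOn_Ioi_cpow_of_lt (by simpa using hs) zero_lt_one
  · exact term_integrable fr_meas fr_bound (by linarith) le_rfl

lemma Wz_formula {s : ℂ} (hs : 0 < s.re) :
    Wz s = s - s * (s - 1) * ∫ u in Ioi (1:ℝ), fr u * (u:ℂ) ^ (-(s + 1)) := by
  have hopen : IsOpen {s : ℂ | 0 < s.re} := isOpen_lt continuous_const continuous_re
  have h1 : AnalyticOnNhd ℂ Wz {s : ℂ | 0 < s.re} := Wz_diff.differentiableOn.analyticOnNhd hopen
  have h2 : AnalyticOnNhd ℂ (fun s : ℂ => s - s * (s - 1) * ∫ u in Ioi (1:ℝ), fr u * (u:ℂ) ^ (-(s + 1)))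
      {s : ℂ | 0 < s.re} := by
    refine DifferentiableOn.analyticOnNhd (fun z hz => DifferentiableAt.differentiableWithinAt ?_) hopen
    exact differentiableAt_id.sub ((by fun_prop : DifferentiableAt ℂ (fun s : ℂ => s * (s - 1)) z).mul
      (mel_diff fr_meas fr_bound hz))
  have hpre : IsPreconnected {s : ℂ | 0 < s.re} := (convex_halfSpace_re_gt 0).isPreconnected
  have := h1.eqOn_of_preconnected_of_eventuallyEq h2 hpre (z₀ := 2) (by simp) ?_
  · exact this hs
  · have ho : IsOpen {s : ℂ | 1 < s.re} := isOpen_lt continuous_const continuous_re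
    filter_upwards [ho.mem_nhds (show (2:ℂ) ∈ {s : ℂ | 1 < s.re} by simp)] with s hs
    have hs' : 1 < s.re := hs
    have hne : s ≠ 1 := by rintro rfl; simp at hs'
    rw [Wz_of_ne hne, zeta_formula_aux hs']
    have := sub_ne_zero.2 hne
    field_simp

lemma zeta_formula {s : ℂ} (hs : 0 < s.re) (h1 : s ≠ 1) :
    riemannZeta s = s / (s - 1) - s * ∫ u in Ioi (1:ℝ), fr u * (u:ℂ) ^ (-(s + 1)) := by
  have h := Wz_formula hs
  rw [Wz_of_ne h1] at h
  have := sub_ne_zero.2 h1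
  field_simp
  linear_combination h

lemma step_integral {s : ℂ} (hs : 0 < s.re) (h1 : s ≠ 1) {N : ℕ} (hN : 1 ≤ N) :
    s * ∫ u in Ioc (N:ℝ) (N+1:ℝ), fr u * (u:ℂ) ^ (-(s + 1)) =
      (N:ℂ) ^ (1 - s) / (s - 1) - ((N + 1 : ℕ):ℂ) ^ (1 - s) / (s - 1) - ((N + 1 : ℕ):ℂ) ^ (-s) := by
  have hN0 : (1:ℝ) ≤ N := by exact_mod_cast hN
  have hs1 := sub_ne_zero.2 h1
  have hs1' : 1 - s ≠ 0 := by intro h0; apply hs1; linear_combination -h0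
  have hs0 : s ≠ 0 := by rintro rfl; simp at hs
  have hpos : ∀ u ∈ uIcc (N:ℝ) (N+1:ℝ), 0 < u := by
    intro u hu; rw [uIcc_of_le (by linarith)] at hu; linarith [hu.1]
  have e1 : ∫ u in Ioc (N:ℝ) (N+1:ℝ), fr u * (u:ℂ) ^ (-(s + 1)) =
      ∫ u in (N:ℝ)..(N+1:ℝ), ((u:ℂ) - N) * (u:ℂ) ^ (-(s + 1)) := by
    rw [intervalIntegral.integral_of_le (by linarith), integral_Ioc_eq_integral_Ioo,
      integral_Ioc_eq_integral_Ioo]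
    refine setIntegral_congr_fun measurableSet_Ioo fun u hu => ?_
    have : ⌊u⌋ = (N:ℤ) := by
      rw [Int.floor_eq_iff]; exact ⟨by exact_mod_cast hu.1.le, by exact_mod_cast hu.2⟩
    have h2 : fr u = u - N := by
      rw [fr, Int.fract, this]; push_cast; rfl
    simp only [h2]
  rw [e1, ← intervalIntegral.integral_const_mul]
  have hA : ∀ u ∈ uIcc (N:ℝ) (N+1:ℝ), HasDerivAt
      (fun u : ℝ => s / (1 - s) * (u:ℂ) ^ (1 - s) + N * (u:ℂ) ^ (-s))
      (s * (((u:ℂ) - N) * (u:ℂ) ^ (-(s + 1)))) u := by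
    intro u hu
    have hu0 := hpos u hu
    have huc : (u:ℂ) ≠ 0 := by exact_mod_cast hu0.ne'
    have d1 := (hasDerivAt_ofReal_cpow_const (x := u) hu0.ne' (r := 1 - s) hs1')
    have d2 := (hasDerivAt_ofReal_cpow_const (x := u) hu0.ne' (r := -s) (neg_ne_zero.2 hs0))
    have := (d1.const_mul (s / (1 - s))).add (d2.const_mul (N : ℂ))
    have hp : (u:ℂ) ^ (-s) = u * (u:ℂ) ^ (-(s + 1)) := by
      have : -s = 1 + -(s + 1) := by ring
      rw [this, cpow_add _ _ huc, cpow_one]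
    convert! this using 1
    have r1 : 1 - s - 1 = -s := by ring
    have r2 : -s - 1 = -(s + 1) := by ring
    rw [r1, r2, hp]
    field_simp
    ring
  rw [integral_eq_sub_of_hasDerivAt hA]
  · have hNc : ((N + 1 : ℕ):ℂ) ≠ 0 := by exact_mod_cast Nat.succ_ne_zero N
    have hNc0 : (N:ℂ) ≠ 0 := by exact_mod_cast (by omega : N ≠ 0)
    have p1 : ((N + 1 : ℕ):ℂ) ^ (1 - s) = (N + 1) * ((N + 1 : ℕ):ℂ) ^ (-s) := by
      rw [sub_eq_add_neg, cpow_add _ _ hNc, cpow_one]; push_cast; ring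
    have p2 : (N:ℂ) ^ (1 - s) = N * (N:ℂ) ^ (-s) := by
      rw [sub_eq_add_neg, cpow_add _ _ hNc0, cpow_one]
    have c1 : (((N:ℝ) + 1 : ℝ) : ℂ) = ((N + 1 : ℕ) : ℂ) := by push_cast; ring
    rw [c1, p1]
    simp only [ofReal_natCast]
    rw [p2]
    have : s / (1 - s) = - (s / (s - 1)) := by rw [← div_neg]; congr 1; ring
    rw [this]
    field_simp
    ring
  · apply ContinuousOn.intervalIntegrable
    intro u hu
    have hu0 := hpos u hu
    have : ContinuousAt (fun u : ℝ => (u:ℂ) ^ (-(s + 1))) u :=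
      continuousAt_ofReal_cpow_const _ _ (Or.inr hu0.ne')
    exact ((continuousAt_const.mul ((by fun_prop : ContinuousAt (fun u : ℝ => (u:ℂ) - N) u).mul this))).continuousWithinAt

lemma zeta_trunc {s : ℂ} (hs : 0 < s.re) (h1 : s ≠ 1) {N : ℕ} (hN : 1 ≤ N) :
    riemannZeta s = ∑ n ∈ Finset.Icc 1 N, (n:ℂ) ^ (-s) + (N:ℂ) ^ (1 - s) / (s - 1) -
      s * ∫ u in Ioi (N:ℝ), fr u * (u:ℂ) ^ (-(s + 1)) := by
  induction N, hN using Nat.le_induction with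
  | base =>
    rw [zeta_formula hs h1]
    have := sub_ne_zero.2 h1
    simp only [Nat.cast_one, Finset.Icc_self, Finset.sum_singleton, one_cpow]
    field_simp; ring
  | succ N hN ih =>
    have hN0 : (1:ℝ) ≤ N := by exact_mod_cast hN
    have st := step_integral hs h1 hN
    rw [ih, Finset.sum_Icc_succ_top (by omega)]
    have : ∫ u in Ioi (N:ℝ), fr u * (u:ℂ) ^ (-(s + 1)) =
        (∫ u in Ioc (N:ℝ) (N+1:ℝ), fr u * (u:ℂ) ^ (-(s + 1))) +
        ∫ u in Ioi (N+1:ℝ), fr u * (u:ℂ) ^ (-(s + 1)) := by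
      have hi := term_integrable fr_meas fr_bound hs hN0
      rw [← Ioc_union_Ioi_eq_Ioi (show (N:ℝ) ≤ N + 1 by linarith),
        setIntegral_union (Ioc_disjoint_Ioi le_rfl) measurableSet_Ioi
        (hi.mono_set Ioc_subset_Ioi_self) (hi.mono_set (Ioi_subset_Ioi (by linarith)))]
    rw [this, mul_add, st]
    have c1 : ((N + 1 : ℕ) : ℝ) = (N:ℝ) + 1 := by push_cast; ring
    rw [c1]; ring
end PieceD

section PieceE
open Complex Set MeasureTheory intervalIntegral Filter Topology Asymptotics

lemma zeta_bound {s : ℂ} (hs : 1 - 1/80 ≤ s.re) (ht : 1 ≤ |s.im|) :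
    ‖riemannZeta s‖ ≤ 100 * |s.im| ^ (1/40 : ℝ) := by
  set T := |s.im| with hT
  set N := ⌊T⌋₊ with hN
  have hN1 : 1 ≤ N := Nat.one_le_floor_iff _ |>.2 ht
  have hNr : (1:ℝ) ≤ N := by exact_mod_cast hN1
  have hN0 : (0:ℝ) < N := by linarith
  have hNT : (N:ℝ) ≤ T := Nat.floor_le (by linarith)
  have hTN : T < N + 1 := Nat.lt_floor_add_one T
  have hs0 : 0 < s.re := by linarith
  have hne : s ≠ 1 := by rintro rfl; simp [hT] at ht; linarith
  have hP : (N:ℝ) ^ (1/80:ℝ) ≤ T ^ (1/40:ℝ) :=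
    (Real.rpow_le_rpow_of_exponent_le hNr (by norm_num)).trans
      (Real.rpow_le_rpow hN0.le hNT (by norm_num))
  have hP2 : (N:ℝ) ^ (1/80:ℝ) * (N:ℝ) ^ (1/80:ℝ) ≤ T ^ (1/40:ℝ) := by
    rw [← Real.rpow_add hN0]; norm_num only
    exact Real.rpow_le_rpow hN0.le hNT (by norm_num)
  have hE : (N:ℝ) ^ (1 - s.re) ≤ (N:ℝ) ^ (1/80:ℝ) :=
    Real.rpow_le_rpow_of_exponent_le hNr (by linarith)
  have b1 : ‖∑ n ∈ Finset.Icc 1 N, (n:ℂ) ^ (-s)‖ ≤ 81 * T ^ (1/40:ℝ) := by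
    have hterm : ∀ n ∈ Finset.Icc 1 N, ‖(n:ℂ) ^ (-s)‖ ≤ (N:ℝ) ^ (1/80:ℝ) * ((n:ℝ))⁻¹ := by
      intro n hn
      obtain ⟨hn1, hn2⟩ := Finset.mem_Icc.1 hn
      have hn1' : (1:ℝ) ≤ n := by exact_mod_cast hn1
      have hn0 : (0:ℝ) < n := by linarith
      rw [norm_natCast_cpow_of_pos (by omega), neg_re]
      calc (n:ℝ) ^ (-s.re) ≤ (n:ℝ) ^ (1/80 + (-1:ℝ)) :=
            Real.rpow_le_rpow_of_exponent_le hn1' (by linarith)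
        _ = (n:ℝ) ^ (1/80:ℝ) * ((n:ℝ))⁻¹ := by rw [Real.rpow_add hn0, Real.rpow_neg_one]
        _ ≤ _ := by
          have : (n:ℝ) ≤ N := by exact_mod_cast hn2
          gcongr
    have hh : ∑ n ∈ Finset.Icc 1 N, ((n:ℝ))⁻¹ ≤ 1 + Real.log N := by
      have := harmonic_le_one_add_log N
      rw [harmonic_eq_sum_Icc] at this
      push_cast at this
      exact this
    have hlog : Real.log N ≤ (N:ℝ) ^ (1/80:ℝ) / (1/80) := Real.log_le_rpow_div hN0.le (by norm_num)
    have hnn : 0 ≤ (N:ℝ) ^ (1/80:ℝ) := by positivity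
    calc _ ≤ ∑ n ∈ Finset.Icc 1 N, ‖(n:ℂ) ^ (-s)‖ := norm_sum_le _ _
      _ ≤ ∑ n ∈ Finset.Icc 1 N, (N:ℝ) ^ (1/80:ℝ) * ((n:ℝ))⁻¹ := Finset.sum_le_sum hterm
      _ = (N:ℝ) ^ (1/80:ℝ) * ∑ n ∈ Finset.Icc 1 N, ((n:ℝ))⁻¹ := by rw [Finset.mul_sum]
      _ ≤ (N:ℝ) ^ (1/80:ℝ) * (1 + 80 * (N:ℝ) ^ (1/80:ℝ)) := by
        gcongr; linarith
      _ ≤ _ := by nlinarith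
  have b2 : ‖(N:ℂ) ^ (1 - s) / (s - 1)‖ ≤ T ^ (1/40:ℝ) := by
    rw [norm_div, norm_natCast_cpow_of_pos (by omega)]
    have : 1 ≤ ‖s - 1‖ := by
      have := abs_im_le_norm (s - 1)
      simp at this; linarith
    have e : (1 - s).re = 1 - s.re := by simp
    rw [e]
    exact (div_le_self (by positivity) this).trans (hE.trans hP)
  have b3 : ‖s * ∫ u in Ioi (N:ℝ), fr u * (u:ℂ) ^ (-(s + 1))‖ ≤ 5 * T ^ (1/40:ℝ) := by
    have tb := tail_bound (g := fr) fr_bound hs0 hNr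
    rw [norm_mul]
    have hn : ‖s‖ ≤ s.re + T := by
      have := norm_le_abs_re_add_abs_im s
      rwa [abs_of_pos hs0] at this
    have e : (N:ℝ) ^ (1 - s.re) = N * (N:ℝ) ^ (- s.re) := by
      rw [sub_eq_add_neg, Real.rpow_add hN0, Real.rpow_one]
    calc ‖s‖ * ‖∫ u in Ioi (N:ℝ), fr u * (u:ℂ) ^ (-(s + 1))‖
        ≤ (s.re + T) * (1 * ((N:ℝ) ^ (-s.re) / s.re)) := by gcongr
      _ = ((s.re + T) / s.re) * (N:ℝ) ^ (-s.re) := by field_simp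
      _ ≤ (5 * N) * (N:ℝ) ^ (-s.re) := by
        gcongr
        rw [div_le_iff₀ hs0]; nlinarith
      _ = 5 * (N:ℝ) ^ (1 - s.re) := by rw [e]; ring
      _ ≤ _ := by gcongr; exact hE.trans hP
  have hTp : 0 ≤ T ^ (1/40:ℝ) := by positivity
  rw [zeta_trunc hs0 hne hN1]
  calc _ ≤ _ := norm_sub_le _ _
    _ ≤ _ := add_le_add_left (norm_add_le _ _) _
    _ ≤ _ := by linarith

lemma zeta_deriv_bound {s : ℂ} (hs : 1 - 1/160 ≤ s.re) (ht : 2 ≤ |s.im|) :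
    ‖deriv riemannZeta s‖ ≤ 32000 * |s.im| ^ (1/40 : ℝ) := by
  have him : ∀ z ∈ Metric.closedBall s (1/160), |z.im| ≤ 2 * |s.im| ∧ 1 ≤ |z.im| ∧ 1 - 1/80 ≤ z.re := by
    intro z hz
    rw [Metric.mem_closedBall, dist_eq_norm] at hz
    have h1 := (abs_im_le_norm (z - s)).trans hz
    have h2 := (abs_re_le_norm (z - s)).trans hz
    rw [sub_im] at h1; rw [sub_re] at h2
    have h3 := abs_sub_abs_le_abs_sub z.im s.im
    have h4 := abs_sub_abs_le_abs_sub s.im z.im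
    rw [abs_sub_comm] at h4
    rw [abs_le] at h2
    exact ⟨by linarith, by linarith, by linarith⟩
  have hT0 : 0 < |s.im| := by linarith
  have hpow : (2 * |s.im|) ^ (1/40:ℝ) ≤ 2 * |s.im| ^ (1/40:ℝ) := by
    rw [Real.mul_rpow (by norm_num) hT0.le]
    gcongr
    calc (2:ℝ) ^ (1/40:ℝ) ≤ 2 ^ (1:ℝ) := Real.rpow_le_rpow_of_exponent_le (by norm_num) (by norm_num)
      _ = 2 := by norm_num
  have := Complex.norm_deriv_le_of_forall_mem_sphere_norm_le (c := s) (R := 1/160)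
    (C := 200 * |s.im| ^ (1/40:ℝ)) (f := riemannZeta) (by norm_num) ?_ ?_
  · refine this.trans (le_of_eq ?_); ring
  · apply DifferentiableOn.diffContOnCl
    rw [closure_ball _ (by norm_num)]
    intro z hz
    refine (differentiableAt_riemannZeta ?_).differentiableWithinAt
    rintro rfl
    have := (him 1 hz).2.1
    simp at this; linarith
  · intro z hz
    obtain ⟨h1, h2, h3⟩ := him z (Metric.sphere_subset_closedBall hz)
    refine (zeta_bound h3 h2).trans ?_
    have : |z.im| ^ (1/40:ℝ) ≤ (2 * |s.im|) ^ (1/40:ℝ) :=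
      Real.rpow_le_rpow (abs_nonneg _) h1 (by norm_num)
    linarith

lemma zeta_near_one {x : ℝ} (h0 : 0 < x) (h1 : x ≤ 1) : ‖riemannZeta (1 + x)‖ ≤ 3 / x := by
  have hre : ((1:ℂ) + x).re = 1 + x := by simp
  have hne : (1:ℂ) + x ≠ 1 := by
    intro h; have := congrArg re h; simp at this; linarith
  rw [zeta_formula (by rw [hre]; linarith) hne]
  have tb := tail_bound (g := fr) fr_bound (z := 1 + x) (by rw [hre]; linarith) le_rfl
  rw [hre, Real.one_rpow] at tb
  have hn : ‖(1:ℂ) + x‖ = 1 + x := by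
    have : (1:ℂ) + x = ((1 + x : ℝ) : ℂ) := by push_cast; ring
    rw [this, norm_real, Real.norm_eq_abs, abs_of_pos (by linarith)]
  have hx : ‖(1:ℂ) + x - 1‖ = x := by
    simp [abs_of_pos h0]
  refine (norm_sub_le _ _).trans ?_
  rw [norm_div, norm_mul, hn, hx]
  have : (1 + x) * ‖∫ u in Ioi (1:ℝ), fr u * (u:ℂ) ^ (-((1 + x : ℂ) + 1))‖ ≤ (1 + x) * (1 * (1 / (1 + x))) := by
    gcongr
  have e : (1 + x) * (1 * (1 / (1 + x))) = 1 := by field_simp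
  rw [e] at this
  have : (1 + x) / x + 1 ≤ 3 / x := by
    rw [div_add_one h0.ne']
    gcongr; linarith
  linarith

lemma three_four_one {x : ℝ} (h0 : 0 < x) (y : ℝ) :
    1 ≤ ‖riemannZeta (1 + x)‖ ^ 3 * ‖riemannZeta (1 + x + I * y)‖ ^ 4 *
      ‖riemannZeta (1 + x + 2 * I * y)‖ := by
  have h := DirichletCharacter.norm_LFunction_product_ge_one (1 : DirichletCharacter ℂ 1) h0 y
  simp only [DirichletCharacter.LFunctionTrivChar, one_pow, DirichletCharacter.LFunction_modOne_eq, norm_mul, norm_pow] at h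
  exact h
end PieceE

section PieceF
open Complex Set MeasureTheory intervalIntegral Filter Topology Asymptotics

/-- constant in the zero-free region -/
noncomputable def cz : ℝ := 1 / (5400 * 128000 ^ 4)

lemma cz_pos : 0 < cz := by unfold cz; positivity

lemma zeta_lower_right {q y : ℝ} (hq : 1 ≤ q) (hy : 2 ≤ |y|) (hyq : |y| ^ (1/40:ℝ) ≤ q) :
    128000 * cz / q ^ 4 ≤ ‖riemannZeta (1 + (cz / q ^ 5 : ℝ) + I * y)‖ := by
  have hc := cz_pos
  have hq0 : 0 < q := by linarith
  set x := cz / q ^ 5 with hx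
  have hx0 : 0 < x := by positivity
  have hx1 : x ≤ 1 := by
    rw [hx, div_le_one (by positivity)]
    have : (1:ℝ) ≤ q ^ 5 := one_le_pow₀ hq
    refine le_trans ?_ this
    unfold cz; norm_num
  have h341 := three_four_one hx0 y
  have b1 := zeta_near_one hx0 hx1
  have b2 : ‖riemannZeta (1 + x + 2 * I * y)‖ ≤ 200 * q := by
    have hre : ((1:ℂ) + x + 2 * I * y).re = 1 + x := by simp
    have him : ((1:ℂ) + x + 2 * I * y).im = 2 * y := by simp
    have := zeta_bound (s := 1 + x + 2 * I * y) (by rw [hre]; linarith) (by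
      rw [him, abs_mul]; norm_num; linarith)
    rw [him, abs_mul, abs_two, Real.mul_rpow (by norm_num) (abs_nonneg _)] at this
    have h2 : (2:ℝ) ^ (1/40:ℝ) ≤ 2 := by
      calc (2:ℝ) ^ (1/40:ℝ) ≤ 2 ^ (1:ℝ) := Real.rpow_le_rpow_of_exponent_le (by norm_num) (by norm_num)
        _ = 2 := by norm_num
    have : (2:ℝ) ^ (1/40:ℝ) * |y| ^ (1/40:ℝ) ≤ 2 * q := by gcongr
    linarith
  set z := ‖riemannZeta (1 + x + I * y)‖ with hz
  have hz0 : 0 ≤ z := norm_nonneg _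
  have key : 1 ≤ (3 / x) ^ 3 * z ^ 4 * (200 * q) :=
    h341.trans (by gcongr)
  have key2 : x ^ 3 ≤ 5400 * q * z ^ 4 := by
    have : (3 / x) ^ 3 * z ^ 4 * (200 * q) = 5400 * q * z ^ 4 / x ^ 3 := by field_simp; ring
    rw [this, le_div_iff₀ (by positivity)] at key
    linarith
  refine le_of_pow_le_pow_left₀ (n := 4) (by norm_num) hz0 ?_
  have e : (128000 * cz / q ^ 4) ^ 4 = x ^ 3 / (5400 * q) := by
    rw [hx, div_pow, div_pow, mul_pow]
    have : (128000:ℝ) ^ 4 * cz ^ 4 = cz ^ 3 / 5400 := by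
      rw [show cz ^ 4 = cz ^ 3 * cz by ring]
      nth_rw 2 [cz]; field_simp
    rw [this]
    field_simp
  rw [e, div_le_iff₀ (by positivity)]
  linarith

lemma zeta_lower_left {q : ℝ} {s : ℂ} (hq : 1 ≤ q) (hy : 2 ≤ |s.im|)
    (hyq : |s.im| ^ (1/40:ℝ) ≤ q) (h1 : 1 - cz / q ^ 5 ≤ s.re) (h2 : s.re ≤ 1) :
    64000 * cz / q ^ 4 ≤ ‖riemannZeta s‖ ∧ ‖deriv riemannZeta s‖ ≤ 32000 * q := by
  have hc := cz_pos
  have hq0 : 0 < q := by linarith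
  set x := cz / q ^ 5 with hx
  have hx0 : 0 < x := by positivity
  have hx1 : x ≤ 1 / 160 := by
    rw [hx, div_le_iff₀ (by positivity)]
    have : (1:ℝ) ≤ q ^ 5 := one_le_pow₀ hq
    have : cz ≤ 1/160 := by unfold cz; norm_num
    nlinarith
  set S : Set ℂ := {z | 1 - x ≤ z.re} ∩ {z | z.im = s.im} with hS
  have hconv : Convex ℝ S := by
    refine (convex_halfSpace_re_ge _).inter ?_
    have : {z : ℂ | z.im = s.im} = {z | z.im ≤ s.im} ∩ {z | s.im ≤ z.im} := by
      ext z; simp [le_antisymm_iff]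
    rw [this]
    exact (convex_halfSpace_im_le _).inter (convex_halfSpace_im_ge _)
  have hd : ∀ z ∈ S, ‖deriv riemannZeta z‖ ≤ 32000 * q := by
    intro z ⟨hz1, hz2⟩
    simp only [mem_ofPred_eq] at hz1 hz2
    refine (zeta_deriv_bound (by linarith) (by rw [hz2]; exact hy)).trans ?_
    rw [hz2]; gcongr
  have hdiff : ∀ z ∈ S, DifferentiableAt ℂ riemannZeta z := by
    intro z ⟨hz1, hz2⟩
    apply differentiableAt_riemannZeta
    rintro rfl
    simp only [mem_ofPred_eq, one_im] at hz2
    rw [← hz2] at hy; norm_num at hy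
  have hsS : s ∈ S := ⟨h1, rfl⟩
  set w : ℂ := 1 + (x:ℂ) + I * s.im with hw
  have hwre : w.re = 1 + x := by simp [hw]
  have hwim : w.im = s.im := by simp [hw]
  have hwS : w ∈ S := ⟨by simp only [mem_ofPred_eq, hwre]; linarith, hwim⟩
  have mv := hconv.norm_image_sub_le_of_norm_deriv_le hdiff hd hsS hwS
  have lw := zeta_lower_right hq hy hyq
  rw [← hx, ← hw] at lw
  have hws : ‖w - s‖ ≤ 2 * x := by
    have : w - s = ((1 + x - s.re : ℝ) : ℂ) := by
      apply Complex.ext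
      · simp [hwre]
      · simp [hwim]
    rw [this, norm_real, Real.norm_eq_abs, abs_of_nonneg (by linarith)]
    linarith
  refine ⟨?_, hd s hsS⟩
  have h3 : ‖riemannZeta w‖ - ‖riemannZeta s‖ ≤ 32000 * q * (2 * x) :=
    (norm_sub_norm_le _ _).trans (mv.trans (by gcongr))
  have e : 32000 * q * (2 * x) = 64000 * cz / q ^ 4 := by rw [hx]; field_simp; norm_num
  have e2 : 128000 * cz / q ^ 4 = 64000 * cz / q ^ 4 + 64000 * cz / q ^ 4 := by ring
  linarith

lemma zeta_logderiv {q : ℝ} {s : ℂ} (hq : 1 ≤ q) (hy : 2 ≤ |s.im|)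
    (hyq : |s.im| ^ (1/40:ℝ) ≤ q) (h1 : 1 - cz / q ^ 5 ≤ s.re) (h2 : s.re ≤ 1) :
    riemannZeta s ≠ 0 ∧ ‖deriv riemannZeta s / riemannZeta s‖ ≤ q ^ 5 / (2 * cz) := by
  have hc := cz_pos
  have hq0 : 0 < q := by linarith
  obtain ⟨a, b⟩ := zeta_lower_left hq hy hyq h1 h2
  have hp : 0 < 64000 * cz / q ^ 4 := by positivity
  refine ⟨norm_pos_iff.1 (hp.trans_le a), ?_⟩
  rw [norm_div]
  calc _ ≤ 32000 * q / (64000 * cz / q ^ 4) := by gcongr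
    _ = _ := by field_simp; norm_num

/-- Zero-free region and log-derivative bound for `(s-1)ζ(s)`. -/
lemma Wz_region : ∃ c C : ℝ, 0 < c ∧ c ≤ 1/2 ∧ 0 < C ∧ ∀ R : ℝ, 2 ≤ R → ∀ s : ℂ,
    1 - c * R ^ (-(1/8:ℝ)) ≤ s.re → s.re ≤ 1 → |s.im| ≤ R →
    Wz s ≠ 0 ∧ ‖deriv Wz s / Wz s‖ ≤ C * R ^ (1/8:ℝ) := by
  -- compact part
  have hK : IsCompact (Icc (1:ℝ) 1 ×ℂ Icc (-2:ℝ) 2) := isCompact_Icc.reProdIm isCompact_Icc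
  obtain ⟨d, hd0, M, hM⟩ : ∃ d : ℝ, 0 < d ∧ ∃ M : ℝ, ∀ s : ℂ, 1 - d ≤ s.re → s.re ≤ 1 → |s.im| ≤ 2 →
      Wz s ≠ 0 ∧ ‖deriv Wz s / Wz s‖ ≤ M := by
    have hopen : IsOpen {s : ℂ | Wz s ≠ 0} := isOpen_ne_fun Wz_diff.continuous continuous_const
    have hsub : Icc (1:ℝ) 1 ×ℂ Icc (-2:ℝ) 2 ⊆ {s : ℂ | Wz s ≠ 0} := by
      intro s hs
      exact Wz_ne_zero (by simpa using (mem_reProdIm.1 hs).1.1)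
    obtain ⟨d, hd, hth⟩ := hK.exists_cthickening_subset_open hopen hsub
    have hcpt : IsCompact (Metric.cthickening d (Icc (1:ℝ) 1 ×ℂ Icc (-2:ℝ) 2)) := hK.cthickening
    have hcont : ContinuousOn (fun s => deriv Wz s / Wz s)
        (Metric.cthickening d (Icc (1:ℝ) 1 ×ℂ Icc (-2:ℝ) 2)) := by
      refine ContinuousOn.div ?_ Wz_diff.continuous.continuousOn (fun s hs => hth hs)
      exact (Wz_diff.contDiff (n := 1)).continuous_deriv le_rfl |>.continuousOn
    obtain ⟨M, hM⟩ := hcpt.exists_bound_of_continuousOn hcont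
    refine ⟨d, hd, M, fun s h1 h2 h3 => ?_⟩
    have hmem : s ∈ Metric.cthickening d (Icc (1:ℝ) 1 ×ℂ Icc (-2:ℝ) 2) := by
      refine Metric.mem_cthickening_of_dist_le s (1 + I * s.im) d _ ?_ ?_
      · rw [mem_reProdIm]
        simp only [add_re, one_re, mul_re, I_re, ofReal_re, zero_mul, I_im, ofReal_im, mul_zero,
          sub_self, add_zero, add_im, one_im, mul_im, one_mul, zero_add]
        exact ⟨by simp, abs_le.1 h3⟩
      · rw [dist_eq_norm]
        have : s - (1 + I * s.im) = ((s.re - 1 : ℝ) : ℂ) := by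
          apply Complex.ext <;> simp
        rw [this, norm_real, Real.norm_eq_abs, abs_le]
        constructor <;> linarith
    exact ⟨hth hmem, hM s hmem⟩
  have hcz := cz_pos
  refine ⟨min (min d cz) (1/2), max M 0 + 1 / (2 * cz) + 1, by positivity, min_le_right _ _, by positivity, ?_⟩
  intro R hR s h1 h2 h3
  have hR0 : 0 < R := by linarith
  have hRle : R ^ (-(1/8:ℝ)) ≤ 1 := Real.rpow_le_one_of_one_le_of_nonpos (by linarith) (by norm_num)
  have hRpos : 0 < R ^ (-(1/8:ℝ)) := by positivity
  have hR1 : 1 ≤ R ^ (1/8:ℝ) := Real.one_le_rpow (by linarith) (by norm_num)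
  have hcd : min (min d cz) (1/2) ≤ d := (min_le_left _ _).trans (min_le_left _ _)
  have hccz : min (min d cz) (1/2) ≤ cz := (min_le_left _ _).trans (min_le_right _ _)
  have hpz : 0 < 1 / (2 * cz) := by positivity
  rcases le_total (|s.im|) 2 with h4 | h4
  · obtain ⟨a, b⟩ := hM s (by nlinarith) h2 h4
    refine ⟨a, b.trans ?_⟩
    have : M ≤ max M 0 := le_max_left _ _
    have : 0 ≤ max M 0 := le_max_right _ _
    nlinarith
  · set q := R ^ (1/40:ℝ) with hq
    have hq1 : 1 ≤ q := Real.one_le_rpow (by linarith) (by norm_num)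
    have hq5 : q ^ 5 = R ^ (1/8:ℝ) := by
      rw [hq, ← Real.rpow_natCast, ← Real.rpow_mul hR0.le]; norm_num
    have hyq : |s.im| ^ (1/40:ℝ) ≤ q := Real.rpow_le_rpow (abs_nonneg _) h3 (by norm_num)
    have e : cz / q ^ 5 = cz * R ^ (-(1/8:ℝ)) := by
      rw [hq5, Real.rpow_neg hR0.le, div_eq_mul_inv]
    obtain ⟨a, b⟩ := zeta_logderiv (s := s) hq1 h4 hyq (by rw [e]; nlinarith) h2
    have hne : s ≠ 1 := by rintro rfl; norm_num at h4
    have hs1 := sub_ne_zero.2 hne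
    have hW : Wz s ≠ 0 := by rw [Wz_of_ne hne]; exact mul_ne_zero hs1 a
    have hder : deriv Wz s = riemannZeta s + (s - 1) * deriv riemannZeta s := by
      have : Wz =ᶠ[𝓝 s] fun s => (s - 1) * riemannZeta s := by
        filter_upwards [isOpen_ne.mem_nhds hne] with t ht using Wz_of_ne ht
      rw [this.deriv_eq]
      have h := ((hasDerivAt_id s).sub_const 1).mul (differentiableAt_riemannZeta hne).hasDerivAt
      have h' := h.deriv
      simp only [id, one_mul] at h'
      exact h'
    refine ⟨hW, ?_⟩
    have e2 : deriv Wz s / Wz s = 1 / (s - 1) + deriv riemannZeta s / riemannZeta s := by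
      rw [hder, Wz_of_ne hne]; field_simp
    rw [e2]
    have h5 : ‖1 / (s - 1)‖ ≤ 1 := by
      rw [norm_div, norm_one]
      have := abs_im_le_norm (s - 1)
      simp at this
      rw [div_le_one (by linarith)]; linarith
    rw [hq5] at b
    have h6 : R ^ (1/8:ℝ) / (2 * cz) = 1 / (2 * cz) * R ^ (1/8:ℝ) := by ring
    have : 0 ≤ max M 0 := le_max_right _ _
    refine (norm_add_le _ _).trans ?_
    nlinarith
end PieceF

section PieceG
open Complex Set MeasureTheory intervalIntegral Filter Topology Asymptotics

lemma Wz_logderiv_eq {s : ℂ} (hne : s ≠ 1) (hz : riemannZeta s ≠ 0) :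
    deriv Wz s / Wz s = 1 / (s - 1) + deriv riemannZeta s / riemannZeta s := by
  have hs1 := sub_ne_zero.2 hne
  have hder : deriv Wz s = riemannZeta s + (s - 1) * deriv riemannZeta s := by
    have : Wz =ᶠ[𝓝 s] fun s => (s - 1) * riemannZeta s := by
      filter_upwards [isOpen_ne.mem_nhds hne] with t ht using Wz_of_ne ht
    rw [this.deriv_eq]
    have h := ((hasDerivAt_id s).sub_const 1).mul (differentiableAt_riemannZeta hne).hasDerivAt
    have h' := h.deriv
    simp only [id, one_mul] at h'
    exact h'
  rw [hder, Wz_of_ne hne]; field_simp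

/-- normalised error in the prime number theorem -/
noncomputable def gp (u : ℝ) : ℂ := ((Chebyshev.psi u / u - 1 : ℝ) : ℂ)

lemma gp_meas : Measurable gp := by
  unfold gp
  exact ((Chebyshev.psi_mono.measurable.div measurable_id).sub_const 1).complex_ofReal

lemma gp_bound : ∀ u : ℝ, 1 ≤ u → ‖gp u‖ ≤ Real.log 4 + 5 := by
  intro u hu
  have h0 := Chebyshev.psi_nonneg u
  have h1 := Chebyshev.psi_le_const_mul_self (x := u) (by linarith)
  have hl : 0 ≤ Real.log 4 := Real.log_nonneg (by norm_num)
  rw [gp, norm_real, Real.norm_eq_abs, abs_le]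
  have a : 0 ≤ Chebyshev.psi u / u := by positivity
  have b : Chebyshev.psi u / u ≤ Real.log 4 + 4 := by rwa [div_le_iff₀ (by linarith)]
  constructor <;> linarith

/-- The analytic continuation of the Mellin transform of `gp`. -/
noncomputable def Fp (z : ℂ) : ℂ := -(deriv Wz (1 + z) / Wz (1 + z) + 1) / (1 + z)

lemma Fp_int {z : ℂ} (hz : 0 < z.re) :
    Fp z = ∫ u in Ioi (1:ℝ), gp u * (u:ℂ) ^ (-(z + 1)) := by
  have hre : 1 < (1 + z).re := by simp; exact hz
  have hz0 : z ≠ 0 := by rintro rfl; simp at hz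
  have hs0 : 1 + z ≠ 0 := by intro h; rw [h] at hre; norm_num at hre
  have hne : 1 + z ≠ 1 := by simpa using hz0
  have hzeta := riemannZeta_ne_zero_of_one_le_re hre.le
  have hb : ((fun n : ℕ => ∑ k ∈ Finset.Icc 1 n, ArithmeticFunction.vonMangoldt k) =O[atTop]
      fun n : ℕ => (n:ℝ) ^ (1:ℝ)) := by
    refine IsBigO.of_bound (Real.log 4 + 4) (Eventually.of_forall fun n => ?_)
    have h1 := Chebyshev.psi_le_const_mul_self (x := n) (Nat.cast_nonneg n)
    rw [Chebyshev.psi, Nat.floor_natCast] at h1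
    rw [Real.rpow_one, Real.norm_of_nonneg (Finset.sum_nonneg fun _ _ => ArithmeticFunction.vonMangoldt_nonneg),
      Real.norm_of_nonneg (Nat.cast_nonneg n)]
    exact h1
  have h := LSeries_eq_mul_integral_of_nonneg (fun n => ArithmeticFunction.vonMangoldt n) (r := 1) zero_le_one
    (s := 1 + z) hre hb (fun _ => ArithmeticFunction.vonMangoldt_nonneg)
  rw [ArithmeticFunction.LSeries_vonMangoldt_eq_deriv_riemannZeta_div hre] at h
  have i1 : ∫ u in Ioi (1:ℝ), (u:ℂ) ^ (-(z + 1)) = 1 / z := by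
    rw [integral_Ioi_cpow_of_lt (by simpa using hz) zero_lt_one]
    simp only [ofReal_one, one_cpow]
    have : -(z + 1) + 1 = -z := by ring
    rw [this, neg_div_neg_eq]
  have i2 : IntegrableOn (fun u : ℝ => (u:ℂ) ^ (-(z + 1))) (Ioi 1) :=
    integrableOn_Ioi_cpow_of_lt (by simpa using hz) zero_lt_one
  have i3 := term_integrable gp_meas gp_bound hz (le_refl (1:ℝ))
  have e : ∫ u in Ioi (1:ℝ), (∑ k ∈ Finset.Icc 1 ⌊u⌋₊, (ArithmeticFunction.vonMangoldt k : ℂ)) *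
      (u:ℂ) ^ (-(1 + z + 1)) = ∫ u in Ioi (1:ℝ), (gp u * (u:ℂ) ^ (-(z + 1)) + (u:ℂ) ^ (-(z + 1))) := by
    refine setIntegral_congr_fun measurableSet_Ioi fun u hu => ?_
    have hu1 : (1:ℝ) < u := hu
    have hu0 : (u:ℂ) ≠ 0 := by exact_mod_cast (by linarith : (0:ℝ) < u).ne'
    have hp : (u:ℂ) ^ (-(z + 1)) = u * (u:ℂ) ^ (-(1 + z + 1)) := by
      have : -(z + 1) = 1 + -(1 + z + 1) := by ring
      rw [this, cpow_add _ _ hu0, cpow_one]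
    have hsum : (∑ k ∈ Finset.Icc 1 ⌊u⌋₊, (ArithmeticFunction.vonMangoldt k : ℂ)) = Chebyshev.psi u := by
      rw [Chebyshev.psi]; push_cast; rfl
    simp only [hsum]
    rw [hp, gp]; push_cast; field_simp; ring
  rw [e, MeasureTheory.integral_add i3 i2, i1] at h
  rw [Fp, Wz_logderiv_eq hne hzeta]
  have h' : deriv riemannZeta (1 + z) / riemannZeta (1 + z) = -((1 + z) * ((∫ u in Ioi (1:ℝ), gp u * (u:ℂ) ^ (-(z + 1))) + 1 / z)) := by
    rw [← h]; ring
  rw [h']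
  have : 1 + z - 1 = z := by ring
  rw [this]
  field_simp
  ring

lemma newman_psi : ∃ L K : ℝ, ∀ᶠ X : ℝ in atTop,
    |L - ∫ u in (1:ℝ)..X, (Chebyshev.psi u / u - 1) / u| ≤ K / Real.log X ^ 4 := by
  obtain ⟨c, C, hc, hc2, hC, H⟩ := Wz_region
  set B := Real.log 4 + 5 with hB
  have hlog4 : 0 ≤ Real.log 4 := Real.log_nonneg (by norm_num)
  set C' := 2 * (C + 1) with hC'
  refine ⟨(Fp 0).re, 4 * (B + C' + 1), ?_⟩
  have hexp : ∀ᶠ X : ℝ in atTop, C' * √(Real.log X) * Real.log X ^ 4 * √(Real.log X) / c *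
      Real.exp (-c * √(Real.log X)) * Real.log X ^ 4 ≤ 1 := by
    have t1 : Tendsto (fun v : ℝ => v ^ 18 * Real.exp (-c * v)) atTop (𝓝 0) := by
      have := tendsto_rpow_mul_exp_neg_mul_atTop_nhds_zero 18 c hc
      refine this.congr fun v => ?_
      norm_cast
    have t2 : Tendsto (fun v : ℝ => C' / c * (v ^ 18 * Real.exp (-c * v))) atTop (𝓝 0) := by
      simpa using t1.const_mul (C' / c)
    have t3 := t2.comp (Real.tendsto_sqrt_atTop.comp Real.tendsto_log_atTop)
    filter_upwards [t3.eventually (ge_mem_nhds (zero_lt_one)), Real.tendsto_log_atTop.eventually_ge_atTop 0] with X h h0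
    simp only [Function.comp] at h
    have e : Real.log X = √(Real.log X) ^ 2 := (Real.sq_sqrt h0).symm
    refine le_trans (le_of_eq ?_) h
    set v := √(Real.log X)
    rw [e]; field_simp
  filter_upwards [hexp, Real.tendsto_log_atTop.eventually_ge_atTop 2, eventually_ge_atTop 1] with X hX hlX hX1
  set l := Real.log X with hl
  set R := l ^ 4 with hR
  have hl0 : 0 < l := by linarith
  have hR2 : 2 ≤ R := by
    have : (2:ℝ) ^ 4 ≤ l ^ 4 := by gcongr
    linarith
  have hR8 : R ^ (1/8:ℝ) = √l := by
    rw [hR, ← Real.rpow_natCast, ← Real.rpow_mul hl0.le, Real.sqrt_eq_rpow]; norm_num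
  have hR8' : R ^ (-(1/8:ℝ)) = 1 / √l := by
    rw [Real.rpow_neg (by linarith), hR8, one_div]
  have hsq1 : 1 ≤ √l := by rw [Real.one_le_sqrt]; linarith
  have hsqpos : 0 < √l := by linarith
  set δ := c / √l with hδ
  have hδ0 : 0 < δ := by positivity
  have hδ1 : δ ≤ 1/2 := by rw [hδ, div_le_iff₀ hsqpos]; nlinarith
  set U : Set ℂ := {z | Wz (1 + z) ≠ 0} ∩ {z | 1 + z ≠ 0} with hU
  have hUo : IsOpen U :=
    (isOpen_ne_fun (Wz_diff.continuous.comp (continuous_const.add continuous_id)) continuous_const).inter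
      (isOpen_ne_fun (continuous_const.add continuous_id) continuous_const)
  have hreg : ∀ z : ℂ, -δ ≤ z.re → z.re ≤ 0 → |z.im| ≤ R →
      Wz (1 + z) ≠ 0 ∧ ‖deriv Wz (1 + z) / Wz (1 + z)‖ ≤ C * √l := by
    intro z h1 h2 h3
    have := H R hR2 (1 + z) (by
      rw [hR8', add_re, one_re]
      have : c * (1 / √l) = δ := by rw [hδ]; ring
      linarith) (by simpa using h2) (by simpa using h3)
    rwa [hR8] at this
  have hsubU : Icc (-δ) R ×ℂ Icc (-R) R ⊆ U := by
    intro z hz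
    obtain ⟨⟨h1, _⟩, h2⟩ := mem_reProdIm.1 hz
    refine ⟨?_, ?_⟩
    · rcases le_total z.re 0 with h | h
      · exact (hreg z h1 h (abs_le.2 h2)).1
      · exact Wz_ne_zero (by simpa using h)
    · intro h0
      have := congrArg re h0
      simp at this; linarith
  have hFd : DifferentiableOn ℂ Fp U := by
    intro z hz
    refine DifferentiableAt.differentiableWithinAt ?_
    have hd2 : Differentiable ℂ (deriv Wz) :=
      (Wz_diff.contDiff (n := 2)).differentiable_deriv_two
    have ha : DifferentiableAt ℂ (fun z : ℂ => 1 + z) z := by fun_prop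
    have h1 : DifferentiableAt ℂ (fun z => deriv Wz (1 + z)) z := (hd2 (1 + z)).comp z ha
    have h2 : DifferentiableAt ℂ (fun z => Wz (1 + z)) z := (Wz_diff (1 + z)).comp z ha
    exact (((h1.div h2 hz.1).add_const 1).neg).div ha hz.2
  have hM : ∀ z : ℂ, -δ ≤ z.re → z.re ≤ 0 → |z.im| ≤ R → ‖Fp z‖ ≤ C' * √l := by
    intro z h1 h2 h3
    obtain ⟨_, b⟩ := hreg z h1 h2 h3
    have hn : 1/2 ≤ ‖1 + z‖ := by
      have := re_le_norm (1 + z)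
      simp at this; linarith
    rw [Fp, norm_div, norm_neg, div_le_iff₀ (by linarith)]
    have : ‖deriv Wz (1 + z) / Wz (1 + z) + 1‖ ≤ C * √l + 1 := by
      refine (norm_add_le _ _).trans ?_
      rw [norm_one]; linarith
    have h5 : (C + 1) * √l ≤ C' * √l * ‖1 + z‖ := by
      rw [hC']
      have : 0 ≤ (C + 1) * √l := by positivity
      nlinarith
    nlinarith
  have nm := newman gp_meas gp_bound hUo hδ0 (by linarith) (by linarith : 1 ≤ R) hX1 hsubU hFd
    (fun z hz => Fp_int hz) hM
  have eint : ∫ u in Ioc (1:ℝ) X, gp u * (u:ℂ) ^ (-((0:ℂ) + 1)) =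
      ((∫ u in (1:ℝ)..X, (Chebyshev.psi u / u - 1) / u : ℝ) : ℂ) := by
    rw [intervalIntegral.integral_of_le hX1, ← integral_complex_ofReal]
    refine setIntegral_congr_fun measurableSet_Ioc fun u hu => ?_
    simp only [zero_add, cpow_neg_one, gp]
    push_cast; ring
  rw [eint] at nm
  have hre := (abs_re_le_norm _).trans nm
  rw [sub_re, ofReal_re] at hre
  refine hre.trans ?_
  have e1 : -δ * l = -c * √l := by
    rw [hδ]
    nth_rw 2 [← Real.sq_sqrt hl0.le]
    field_simp
  rw [e1]
  have hR4 : 0 < R := by linarith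
  rw [le_div_iff₀ hR4]
  have x1 : B / R * R = B := by field_simp
  have x2 : C' * √l / R ^ 2 * R ≤ C' := by
    have hC'0 : 0 < C' := by positivity
    have : √l ≤ R := by
      have : √l ≤ l := Real.sqrt_le_self_iff.2 (Or.inr (by linarith))
      have : l ≤ l ^ 4 := le_self_pow₀ (by linarith) (by norm_num)
      linarith
    have e : C' * √l / R ^ 2 * R = C' * (√l / R) := by field_simp
    rw [e]
    have : √l / R ≤ 1 := (div_le_one hR4).2 this
    nlinarith
  have x3 : C' * √l * R / δ * Real.exp (-c * √l) * R ≤ 1 := by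
    refine le_trans (le_of_eq ?_) hX
    rw [hδ]; field_simp
  nlinarith
end PieceG

section PieceH
open Set MeasureTheory intervalIntegral Filter Topology Asymptotics

lemma psi_ii {a b : ℝ} (ha : 0 < a) (hb : 0 < b) :
    IntervalIntegrable (fun u => (Chebyshev.psi u / u - 1) / u) volume a b := by
  have h0 : IntervalIntegrable Chebyshev.psi volume a b := Chebyshev.psi_mono.intervalIntegrable
  have hc : ContinuousOn (fun u : ℝ => u⁻¹) (uIcc a b) := by
    apply continuousOn_id.inv₀
    intro u hu
    have := hu.1
    have : 0 < min a b := lt_min ha hb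
    simp only [id]
    linarith [hu.1, show a ⊓ b = min a b from rfl]
  simp only [div_eq_mul_inv]
  exact ((h0.mul_continuousOn hc).sub intervalIntegrable_const).mul_continuousOn hc

lemma psi_asymp : ∃ K : ℝ, 0 ≤ K ∧ ∀ᶠ x : ℝ in atTop,
    |Chebyshev.psi x - x| ≤ K * (x / Real.log x ^ 2) := by
  obtain ⟨L, K₀, h⟩ := newman_psi
  set K := |K₀| with hK
  have hK0 : 0 ≤ K := abs_nonneg _
  set J : ℝ → ℝ := fun X => ∫ u in (1:ℝ)..X, (Chebyshev.psi u / u - 1) / u with hJ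
  obtain ⟨X₀, hX₀⟩ := eventually_atTop.1 h
  have hJb : ∀ X, X₀ ≤ X → |L - J X| ≤ K / Real.log X ^ 4 := by
    intro X hX
    refine (hX₀ X hX).trans ?_
    gcongr; exact le_abs_self _
  refine ⟨17 * K + 1, by positivity, ?_⟩
  filter_upwards [eventually_ge_atTop (2 * max X₀ 1), Real.tendsto_log_atTop.eventually_ge_atTop 2]
    with x hx hl
  set l := Real.log x with hldef
  have hm1 : X₀ ≤ max X₀ 1 := le_max_left _ _
  have hm2 : 1 ≤ max X₀ 1 := le_max_right _ _
  have hx0 : 0 < x := by linarith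
  have hl0 : 0 < l := by linarith
  set ε := 1 / l ^ 2 with hε
  have hε0 : 0 < ε := by positivity
  have hε1 : ε ≤ 1/2 := by
    rw [hε]; apply one_div_le_one_div_of_le (by norm_num); nlinarith
  have hJd : ∀ a b, 0 < a → 0 < b → J b - J a = ∫ u in a..b, (Chebyshev.psi u / u - 1) / u := by
    intro a b ha hb
    exact integral_interval_sub_left (psi_ii one_pos hb) (psi_ii one_pos ha)
  have hxl : x / l ^ 2 = x * ε := by rw [hε]; ring
  have hJx := abs_le.1 (hJb x (by linarith))
  rw [abs_le]
  constructor
  · -- lower bound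
    set y := x * (1 - ε) with hy
    have hy2 : x / 2 ≤ y := by nlinarith
    have hyx : y ≤ x := by nlinarith
    have hy0 : 0 < y := by linarith
    have hly : l / 2 ≤ Real.log y := by
      have h1 : Real.log (x / 2) ≤ Real.log y := Real.log_le_log (by positivity) hy2
      rw [Real.log_div hx0.ne' (by norm_num)] at h1
      have := Real.log_two_lt_d9
      linarith
    have hJy := abs_le.1 (hJb y (by linarith))
    have hJy' : K / Real.log y ^ 4 ≤ 16 * (K / l ^ 4) := by
      calc K / Real.log y ^ 4 ≤ K / (l / 2) ^ 4 := by gcongr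
        _ = _ := by field_simp; norm_num
    by_contra! hcon
    have hD : 0 ≤ y - Chebyshev.psi x := by
      rw [hxl] at hcon
      have : y = x - x * ε := by rw [hy]; ring
      nlinarith [mul_nonneg hK0 (mul_nonneg hx0.le hε0.le)]
    have hInt : J x - J y ≤ ∫ u in y..x, -((y - Chebyshev.psi x) / x ^ 2) := by
      rw [hJd y x hy0 hx0]
      refine integral_mono_on hyx (psi_ii hy0 hx0) intervalIntegrable_const ?_
      intro u hu
      have hu0 : 0 < u := by linarith [hu.1]
      have hp := Chebyshev.psi_mono hu.2
      have e : (Chebyshev.psi u / u - 1) / u = -((u - Chebyshev.psi u) / u ^ 2) := by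
        field_simp; ring
      rw [e, neg_le_neg_iff]
      calc (y - Chebyshev.psi x) / x ^ 2 ≤ (y - Chebyshev.psi x) / u ^ 2 := by
            gcongr; exact hu.2
        _ ≤ _ := by gcongr; exact hu.1
    rw [intervalIntegral.integral_const, smul_eq_mul] at hInt
    have hxy : x - y = x * ε := by rw [hy]; ring
    rw [hxy] at hInt
    have h3 : x * ε * ((y - Chebyshev.psi x) / x ^ 2) ≤ 17 * (K / l ^ 4) := by linarith [hJx.1, hJx.2, hJy.1, hJy.2]
    have h4 : x * ε * ((y - Chebyshev.psi x) / x ^ 2) = (y - Chebyshev.psi x) / (x * l ^ 2) := by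
      rw [hε]; field_simp
    rw [h4, div_le_iff₀ (by positivity)] at h3
    have h5 : 17 * (K / l ^ 4) * (x * l ^ 2) = 17 * K * (x / l ^ 2) := by field_simp
    rw [h5] at h3
    rw [hxl] at h3 hcon
    nlinarith
  · -- upper bound
    set y := x * (1 + ε) with hy
    have hyx : x ≤ y := by nlinarith
    have hy2 : y ≤ 2 * x := by nlinarith
    have hy0 : 0 < y := by linarith
    have hly : l ≤ Real.log y := Real.log_le_log hx0 hyx
    have hJy := abs_le.1 (hJb y (by linarith))
    have hJy' : K / Real.log y ^ 4 ≤ (K / l ^ 4) := by gcongr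
    by_contra! hcon
    have hD : 0 ≤ Chebyshev.psi x - y := by
      rw [hxl] at hcon
      have : y = x + x * ε := by rw [hy]; ring
      nlinarith [mul_nonneg hK0 (mul_nonneg hx0.le hε0.le)]
    have hInt : ∫ u in x..y, ((Chebyshev.psi x - y) / y ^ 2) ≤ J y - J x := by
      rw [hJd x y hx0 hy0]
      refine integral_mono_on hyx intervalIntegrable_const (psi_ii hx0 hy0) ?_
      intro u hu
      have hu0 : 0 < u := by linarith [hu.1]
      have hp := Chebyshev.psi_mono hu.1
      have e : (Chebyshev.psi u / u - 1) / u = ((Chebyshev.psi u - u) / u ^ 2) := by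
        field_simp
      rw [e]
      calc (Chebyshev.psi x - y) / y ^ 2 ≤ (Chebyshev.psi x - y) / u ^ 2 := by
            gcongr; exact hu.2
        _ ≤ _ := by gcongr; exact hu.2
    rw [intervalIntegral.integral_const, smul_eq_mul] at hInt
    have hxy : y - x = x * ε := by rw [hy]; ring
    rw [hxy] at hInt
    have h3 : x * ε * ((Chebyshev.psi x - y) / y ^ 2) ≤ 2 * (K / l ^ 4) := by linarith [hJx.1, hJx.2, hJy.1, hJy.2]
    have h3' : x * ε * ((Chebyshev.psi x - y) / (2 * x) ^ 2) ≤ 2 * (K / l ^ 4) := by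
      refine le_trans ?_ h3
      gcongr
    have h4 : x * ε * ((Chebyshev.psi x - y) / (2 * x) ^ 2) = (Chebyshev.psi x - y) / (4 * x * l ^ 2) := by
      rw [hε]; field_simp; norm_num
    rw [h4, div_le_iff₀ (by positivity)] at h3'
    have h5 : 2 * (K / l ^ 4) * (4 * x * l ^ 2) = 8 * K * (x / l ^ 2) := by field_simp; ring
    rw [h5] at h3'
    rw [hxl] at h3' hcon
    nlinarith [mul_nonneg hK0 (mul_nonneg hx0.le hε0.le)]

lemma theta_asymp : ∃ K : ℝ, 0 ≤ K ∧ ∀ᶠ x : ℝ in atTop,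
    |Chebyshev.theta x - x| ≤ K * (x / Real.log x ^ 2) := by
  obtain ⟨K, hK, h⟩ := psi_asymp
  refine ⟨K + 2, by positivity, ?_⟩
  have ho : ∀ᶠ x : ℝ in atTop, Real.log x ^ 3 ≤ √x := by
    have := isLittleO_log_rpow_rpow_atTop 3 (show (0:ℝ) < 1/2 by norm_num)
    filter_upwards [this.bound one_pos, eventually_ge_atTop 1] with x hx h1
    rw [one_mul, ← Real.sqrt_eq_rpow, Real.norm_of_nonneg (Real.sqrt_nonneg x)] at hx
    have := (le_abs_self _).trans hx
    exact_mod_cast this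
  filter_upwards [h, ho, eventually_gt_atTop 1] with x h1 h2 hx
  have h3 := Chebyshev.abs_psi_sub_theta_le_sqrt_mul_log hx.le
  have hl : 0 < Real.log x := Real.log_pos hx
  have h4 : 2 * √x * Real.log x ≤ 2 * (x / Real.log x ^ 2) := by
    rw [mul_assoc]; gcongr
    rw [le_div_iff₀ (by positivity)]
    have e : √x * √x = x := Real.mul_self_sqrt (by linarith)
    calc √x * Real.log x * Real.log x ^ 2 = √x * Real.log x ^ 3 := by ring
      _ ≤ √x * √x := by gcongr
      _ = x := e
  have e : Chebyshev.theta x - x = (Chebyshev.psi x - x) - (Chebyshev.psi x - Chebyshev.theta x) := by ring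
  rw [e]
  refine (abs_sub _ _).trans ?_
  linarith
end PieceH

section PieceI
open Set MeasureTheory intervalIntegral Filter Topology Asymptotics

/-- the derivative of `t / log t` -/
noncomputable def Dl (t : ℝ) : ℝ := (Real.log t - 1) / Real.log t ^ 2

lemma log_ne {t : ℝ} (ht : 2 ≤ t) : Real.log t ≠ 0 := (Real.log_pos (by linarith)).ne'

lemma Dl_deriv {t : ℝ} (ht : 2 ≤ t) : HasDerivAt (fun t : ℝ => t / Real.log t) (Dl t) t := by
  have h0 : t ≠ 0 := by linarith
  have := (hasDerivAt_id t).div (Real.hasDerivAt_log h0) (log_ne ht)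
  convert! this using 1
  simp only [Dl, id]
  field_simp

lemma Dl_cont {a b : ℝ} (ha : 2 ≤ a) (hb : 2 ≤ b) : ContinuousOn Dl (uIcc a b) := by
  intro t ht
  have h2 : 2 ≤ t := (le_min ha hb).trans ht.1
  have h0 : t ≠ 0 := by linarith
  have hl : Real.log t ^ 2 ≠ 0 := pow_ne_zero _ (log_ne h2)
  have : ContinuousAt Dl t := by
    unfold Dl
    exact ((Real.continuousAt_log h0).sub continuousAt_const).div ((Real.continuousAt_log h0).pow 2) hl
  exact this.continuousWithinAt

lemma abel_primes {x : ℝ} (hx : 2 ≤ x) :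
    ∑ p ∈ (Finset.Icc 0 ⌊x⌋₊).filter Nat.Prime, (p:ℝ) =
      x / Real.log x * Chebyshev.theta x - ∫ t in (2:ℝ)..x, Dl t * Chebyshev.theta t := by
  let a : ℕ → ℝ := fun n => if n.Prime then Real.log n else 0
  have hth : ∀ t : ℝ, ∑ k ∈ Finset.Icc 0 ⌊t⌋₊, a k = Chebyshev.theta t := by
    intro t
    rw [Chebyshev.theta_eq_sum_Icc, Finset.sum_filter]
  have h := sum_mul_eq_sub_integral_mul₁ a (f := fun t => t / Real.log t) (by simp [a, Nat.not_prime_zero])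
    (by simp [a]) x (fun t ht => (Dl_deriv ht.1).differentiableAt) ?_
  · rw [Finset.sum_filter]
    trans ∑ k ∈ Finset.Icc 0 ⌊x⌋₊, (k:ℝ) / Real.log k * a k
    · refine Finset.sum_congr rfl fun n _ => ?_
      simp only [a]
      split_ifs with hp
      · have := log_ne (t := n) (by exact_mod_cast hp.two_le)
        field_simp
      · simp
    · rw [h, hth, intervalIntegral.integral_of_le hx]
      congr 1
      refine setIntegral_congr_fun measurableSet_Ioc fun t ht => ?_
      simp only [hth]
      rw [(Dl_deriv ht.1.le).deriv]
  · have : IntegrableOn Dl (Icc 2 x) := by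
      have := Dl_cont le_rfl hx
      rw [uIcc_of_le hx] at this
      exact this.integrableOn_Icc
    exact this.congr_fun (fun t ht => ((Dl_deriv ht.1).deriv).symm) measurableSet_Icc

/-- antiderivative -/
noncomputable def Pl (t : ℝ) : ℝ := t ^ 2 / (2 * Real.log t) - t ^ 2 / (4 * Real.log t ^ 2)

lemma Pl_deriv {t : ℝ} (ht : 2 ≤ t) :
    HasDerivAt Pl (Dl t * t + t / (2 * Real.log t ^ 3)) t := by
  have h0 : t ≠ 0 := by linarith
  have hl := log_ne ht
  have hlog := Real.hasDerivAt_log h0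
  have hsq := hasDerivAt_pow 2 t
  have h1 := hsq.div (hlog.const_mul 2) (by simpa using hl)
  have h2 := hsq.div ((hlog.pow 2).const_mul 4) (by simpa using hl)
  convert! h1.sub h2 using 1
  simp only [Dl, Pi.pow_apply]
  push_cast
  simp only [pow_one]
  field_simp
  ring

lemma Ql_deriv {t : ℝ} (ht : 2 ≤ t) :
    HasDerivAt (fun t : ℝ => t ^ 2 / Real.log t ^ 3)
      (2 * t / Real.log t ^ 3 - 3 * t / Real.log t ^ 4) t := by
  have h0 : t ≠ 0 := by linarith
  have hl := log_ne ht
  have hlog := Real.hasDerivAt_log h0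
  have hsq := hasDerivAt_pow 2 t
  have h1 := hsq.div (hlog.pow 3) (pow_ne_zero _ hl)
  convert! h1 using 1
  simp only [Pi.pow_apply]
  push_cast
  simp only [pow_one]
  field_simp

lemma theta_ii (a b : ℝ) : IntervalIntegrable Chebyshev.theta volume a b :=
  Chebyshev.theta_mono.intervalIntegrable

lemma recip_cont {a b : ℝ} (ha : 2 ≤ a) (hb : 2 ≤ b) (n : ℕ) (k : ℝ) (hk : k ≠ 0) :
    ContinuousOn (fun t : ℝ => t / (k * Real.log t ^ n)) (uIcc a b) := by
  intro t ht
  have h2 : 2 ≤ t := (le_min ha hb).trans ht.1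
  have h0 : t ≠ 0 := by linarith
  have hl : k * Real.log t ^ n ≠ 0 := mul_ne_zero hk (pow_ne_zero _ (log_ne h2))
  exact (continuousAt_id.div (continuousAt_const.mul ((Real.continuousAt_log h0).pow n)) hl).continuousWithinAt

lemma sum_asymp : ∃ K₁ K₂ : ℝ, ∀ᶠ x : ℝ in atTop,
    |∑ p ∈ (Finset.Icc 0 ⌊x⌋₊).filter Nat.Prime, (p:ℝ) - x ^ 2 / (2 * Real.log x)
      - x ^ 2 / (4 * Real.log x ^ 2)| ≤ K₁ + K₂ * (x ^ 2 / Real.log x ^ 3) := by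
  obtain ⟨K, hK, h⟩ := theta_asymp
  obtain ⟨T₀, hT₀⟩ := eventually_atTop.1 (h.and (Real.tendsto_log_atTop.eventually_ge_atTop 3))
  set T := max T₀ 2 with hT
  have hT2 : 2 ≤ T := le_max_right _ _
  have hTT : T₀ ≤ T := le_max_left _ _
  refine ⟨|(∫ t in (2:ℝ)..T, Dl t * Chebyshev.theta t) - Pl T|, 2 * K + 1, ?_⟩
  filter_upwards [eventually_ge_atTop T] with x hx
  have hx2 : 2 ≤ x := hT2.trans hx
  obtain ⟨hxE, hxl⟩ := hT₀ x (hTT.trans hx)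
  have hth : ∀ a b, 2 ≤ a → 2 ≤ b → IntervalIntegrable (fun t => Dl t * Chebyshev.theta t) volume a b :=
    fun a b ha hb => (theta_ii a b).continuousOn_mul (Dl_cont ha hb)
  have i2 : IntervalIntegrable (fun t => Dl t * t + t / (2 * Real.log t ^ 3)) volume T x :=
    (((Dl_cont hT2 hx2).mul continuousOn_id).add (recip_cont hT2 hx2 3 2 two_ne_zero)).intervalIntegrable
  have hP : ∫ t in T..x, (Dl t * t + t / (2 * Real.log t ^ 3)) = Pl x - Pl T := by
    refine integral_eq_sub_of_hasDerivAt (fun t ht => Pl_deriv ?_) i2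
    exact (le_min hT2 hx2).trans ht.1
  have hsplit := integral_add_adjacent_intervals (hth 2 T le_rfl hT2) (hth T x hT2 hx2)
  have iQ : IntervalIntegrable (fun t => 2 * t / Real.log t ^ 3 - 3 * t / Real.log t ^ 4) volume T x := by
    have c1 := (recip_cont hT2 hx2 3 1 one_ne_zero)
    have c2 := (recip_cont hT2 hx2 4 1 one_ne_zero)
    have := ((continuousOn_const (c := (2:ℝ))).mul c1).sub ((continuousOn_const (c := (3:ℝ))).mul c2)
    refine (this.congr fun t _ => ?_).intervalIntegrable
    simp only [one_mul, Pi.mul_apply, Pi.sub_apply]; ring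
  have hQ : ∫ t in T..x, (2 * t / Real.log t ^ 3 - 3 * t / Real.log t ^ 4) =
      x ^ 2 / Real.log x ^ 3 - T ^ 2 / Real.log T ^ 3 := by
    refine integral_eq_sub_of_hasDerivAt (f := fun t : ℝ => t ^ 2 / Real.log t ^ 3) (fun t ht => Ql_deriv ?_) iQ
    exact (le_min hT2 hx2).trans ht.1
  have hdiff : |∫ t in T..x, (Dl t * Chebyshev.theta t - (Dl t * t + t / (2 * Real.log t ^ 3)))| ≤
      ∫ t in T..x, (K + 1) * (2 * t / Real.log t ^ 3 - 3 * t / Real.log t ^ 4) := by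
    rw [← Real.norm_eq_abs]
    refine norm_integral_le_of_norm_le hx (Eventually.of_forall fun t ht => ?_) (iQ.const_mul _)
    have htT : T ≤ t := ht.1.le
    obtain ⟨hE, hl⟩ := hT₀ t (hTT.trans htT)
    have ht0 : 0 < t := by linarith
    have hl0 : 0 < Real.log t := by linarith
    have e : Dl t * Chebyshev.theta t - (Dl t * t + t / (2 * Real.log t ^ 3)) =
      Dl t * (Chebyshev.theta t - t) - t / (2 * Real.log t ^ 3) := by ring
    rw [e, Real.norm_eq_abs]
    have hD : |Dl t| ≤ 1 / Real.log t := by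
      rw [Dl, abs_of_nonneg (div_nonneg (by linarith) (by positivity)), div_le_div_iff₀ (by positivity) hl0]
      nlinarith
    have q1 : t / Real.log t ^ 3 ≤ 2 * t / Real.log t ^ 3 - 3 * t / Real.log t ^ 4 := by
      have e1 : 2 * t / Real.log t ^ 3 - 3 * t / Real.log t ^ 4 - t / Real.log t ^ 3 =
        t * (Real.log t - 3) / Real.log t ^ 4 := by field_simp; ring
      have : 0 ≤ t * (Real.log t - 3) / Real.log t ^ 4 :=
        div_nonneg (mul_nonneg ht0.le (by linarith)) (by positivity)
      linarith
    have q2 : |Dl t * (Chebyshev.theta t - t)| ≤ K * (t / Real.log t ^ 3) := by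
      rw [abs_mul]
      calc _ ≤ 1 / Real.log t * (K * (t / Real.log t ^ 2)) := by gcongr
        _ = _ := by field_simp
    have q3 : |t / (2 * Real.log t ^ 3)| ≤ t / Real.log t ^ 3 := by
      rw [abs_of_nonneg (by positivity)]
      gcongr
      have : 0 < Real.log t ^ 3 := by positivity
      linarith
    refine (abs_sub _ _).trans ?_
    nlinarith
  rw [intervalIntegral.integral_const_mul, hQ, integral_sub (hth T x hT2 hx2) i2, hP] at hdiff
  have hTp : 0 ≤ T ^ 2 / Real.log T ^ 3 := by
    have : 0 ≤ Real.log T := Real.log_nonneg (by linarith)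
    positivity
  have hx0 : 0 < x := by linarith
  have hl0 : 0 < Real.log x := by linarith
  have hmain : |x / Real.log x * (Chebyshev.theta x - x)| ≤ K * (x ^ 2 / Real.log x ^ 3) := by
    rw [abs_mul, abs_of_pos (by positivity)]
    calc _ ≤ x / Real.log x * (K * (x / Real.log x ^ 2)) := by gcongr
      _ = _ := by field_simp
  have hfin : ∑ p ∈ (Finset.Icc 0 ⌊x⌋₊).filter Nat.Prime, (p:ℝ) - x ^ 2 / (2 * Real.log x)
      - x ^ 2 / (4 * Real.log x ^ 2) = x / Real.log x * (Chebyshev.theta x - x) -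
      ((∫ t in T..x, Dl t * Chebyshev.theta t) - (Pl x - Pl T)) -
      ((∫ t in (2:ℝ)..T, Dl t * Chebyshev.theta t) - Pl T) := by
    rw [abel_primes hx2, ← hsplit]
    have : x ^ 2 / (2 * Real.log x) + x ^ 2 / (4 * Real.log x ^ 2) = x / Real.log x * x - Pl x := by
      rw [Pl]; field_simp; ring
    linear_combination -this
  rw [hfin]
  refine (abs_sub _ _).trans ?_
  have t1 := (abs_sub (x / Real.log x * (Chebyshev.theta x - x))
      ((∫ t in T..x, Dl t * Chebyshev.theta t) - (Pl x - Pl T)))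
  nlinarith

end PieceI

/-- As `x → ∞`,
`Σ_{p < x} p = x²/(2 log x) + x²/(4 (log x)²) + O(x²/(log x)³)`. -/
theorem primeSumBelow_asymptotic :
    (fun x : ℝ =>
        primeSumBelow x - x ^ 2 / (2 * Real.log x) - x ^ 2 / (4 * Real.log x ^ 2))
      =O[atTop] fun x : ℝ => x ^ 2 / Real.log x ^ 3 := by
  obtain ⟨K₁, K₂, h⟩ := sum_asymp
  have ho : ∀ᶠ x : ℝ in atTop, Real.log x ^ 3 ≤ x := by
    have := isLittleO_log_rpow_rpow_atTop 3 (show (0:ℝ) < 1 by norm_num)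
    filter_upwards [this.bound one_pos, eventually_ge_atTop 1] with x hx h1
    rw [one_mul, Real.rpow_one, Real.norm_of_nonneg (by linarith : (0:ℝ) ≤ x)] at hx
    have := (le_abs_self _).trans hx
    exact_mod_cast this
  refine Asymptotics.IsBigO.of_bound (|K₁| + K₂ + 1) ?_
  filter_upwards [h, ho, eventually_gt_atTop 1] with x h1 h2 hx
  have hl : 0 < Real.log x := Real.log_pos hx
  have hxQ : x ≤ x ^ 2 / Real.log x ^ 3 := by
    rw [le_div_iff₀ (by positivity)]; nlinarith
  have hfl : ⌊x⌋₊ ≤ ⌈x⌉₊ := Nat.floor_le_ceil x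
  have hcl : ⌈x⌉₊ ≤ ⌊x⌋₊ + 1 := Nat.ceil_le_floor_add_one x
  have hsub : Finset.range ⌈x⌉₊ ⊆ Finset.Icc 0 ⌊x⌋₊ := by
    intro n hn
    have := Finset.mem_range.1 hn
    exact Finset.mem_Icc.2 ⟨by omega, by omega⟩
  have hsub2 : Finset.Icc 0 ⌊x⌋₊ ⊆ insert ⌊x⌋₊ (Finset.range ⌈x⌉₊) := by
    intro n hn
    have := (Finset.mem_Icc.1 hn).2
    rw [Finset.mem_insert, Finset.mem_range]; omega
  have d1 : primeSumBelow x ≤ ∑ p ∈ (Finset.Icc 0 ⌊x⌋₊).filter Nat.Prime, (p:ℝ) :=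
    Finset.sum_le_sum_of_subset_of_nonneg (Finset.filter_subset_filter _ hsub) fun _ _ _ => Nat.cast_nonneg _
  have d2 : ∑ p ∈ (Finset.Icc 0 ⌊x⌋₊).filter Nat.Prime, (p:ℝ) ≤ primeSumBelow x + x := by
    have hA : (Finset.Icc 0 ⌊x⌋₊).filter Nat.Prime ⊆
        insert ⌊x⌋₊ ((Finset.range ⌈x⌉₊).filter Nat.Prime) := by
      intro n hn
      obtain ⟨a, b⟩ := Finset.mem_filter.1 hn
      rcases Finset.mem_insert.1 (hsub2 a) with c | c
      · exact Finset.mem_insert.2 (Or.inl c)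
      · exact Finset.mem_insert.2 (Or.inr (Finset.mem_filter.2 ⟨c, b⟩))
    refine (Finset.sum_le_sum_of_subset_of_nonneg hA fun _ _ _ => Nat.cast_nonneg _).trans ?_
    have hfx : ((⌊x⌋₊ : ℕ) : ℝ) ≤ x := Nat.floor_le (by linarith)
    have h0 : (0:ℝ) ≤ (⌊x⌋₊ : ℕ) := Nat.cast_nonneg _
    by_cases hmem : ⌊x⌋₊ ∈ (Finset.range ⌈x⌉₊).filter Nat.Prime
    · rw [Finset.insert_eq_of_mem hmem]; unfold primeSumBelow; linarith
    · rw [Finset.sum_insert hmem]; unfold primeSumBelow; linarith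
  rw [Real.norm_eq_abs, Real.norm_of_nonneg (by positivity)]
  have h3 := abs_le.1 h1
  have hK1 := le_abs_self K₁
  have hK1' := abs_nonneg K₁
  rw [abs_le]
  constructor <;> nlinarith [h3.1, h3.2]
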